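/- arXiv:1010.4613 — 3 statements merged into one kernel-verified Lean document; each statement's English description precedes it below -/
import Mathlib

section
/- Let A, B, C be three pairwise distinct, pairwise noncrossing nonempty compact convex subsets of ℝ² such that no two of them are tangent and no line is tangent to all three. Then the family {A, B, C} is in convex position if and only if the ordered triple (A, B, C) is clockwise oriented or counterclockwise oriented. -/
open Set

noncomputable section

/-- The Euclidean plane. -/
abbrev Plane : Type := EuclideanSpace ℝ (Fin 2)

/-- The 2×2 determinant of two plane vectors. -/
def det2 (u v : Plane) : ℝ := u 0 * v 1 - u 1 * v 0

/-- A convex body in the plane: nonempty, compact and convex. -/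
def ConvexBody2 (A : Set Plane) : Prop := A.Nonempty ∧ IsCompact A ∧ Convex ℝ A

/-- A family of sets is in convex position if removing any member changes the
convex hull of the union of the family. -/
def ConvexPos (F : Set (Set Plane)) : Prop :=
  ∀ A ∈ F, convexHull ℝ (⋃₀ F) ≠ convexHull ℝ (⋃₀ (F \ {A}))

/-- A family is in general position if every 3-element subfamily is in convex position. -/
def GenPos (F : Set (Set Plane)) : Prop :=
  ∀ G ⊆ F, G.ncard = 3 → ConvexPos G

/-- Two sets are noncrossing if both set differences are connected. -/
def NoncrossingPair (A B : Set Plane) : Prop := IsConnected (A \ B) ∧ IsConnected (B \ A)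

/-- Two convex bodies are tangent if they intersect but their interiors are disjoint. -/
def TangentBodies (A B : Set Plane) : Prop :=
  (A ∩ B).Nonempty ∧ interior A ∩ interior B = ∅

/-- The line `{x | f x = c}` (for `f ≠ 0`) is tangent to `A`:
it meets `A` and `A` lies in one of the two closed half-planes it bounds. -/
def TangentLineTo (f : Plane →ₗ[ℝ] ℝ) (c : ℝ) (A : Set Plane) : Prop :=
  (∃ x ∈ A, f x = c) ∧ ((∀ x ∈ A, f x ≤ c) ∨ (∀ x ∈ A, c ≤ f x))

/-- No line is tangent to three distinct members of the family. -/
def NoTripleTangentLine (F : Set (Set Plane)) : Prop :=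
  ∀ f : Plane →ₗ[ℝ] ℝ, f ≠ 0 → ∀ c : ℝ, ∀ A ∈ F, ∀ B ∈ F, ∀ C ∈ F,
    A ≠ B → B ≠ C → A ≠ C →
    ¬ (TangentLineTo f c A ∧ TangentLineTo f c B ∧ TangentLineTo f c C)

/-- The ordered triple `(A₁, A₂, A₃)` is counterclockwise oriented. -/
def CCWOriented (A₁ A₂ A₃ : Set Plane) : Prop :=
  ∃ a₁ ∈ A₁ ∩ frontier (convexHull ℝ (A₁ ∪ A₂ ∪ A₃)),
  ∃ a₂ ∈ A₂ ∩ frontier (convexHull ℝ (A₁ ∪ A₂ ∪ A₃)),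
  ∃ a₃ ∈ A₃ ∩ frontier (convexHull ℝ (A₁ ∪ A₂ ∪ A₃)),
    0 < det2 (a₂ - a₁) (a₃ - a₁)

/-- The ordered triple `(A₁, A₂, A₃)` is clockwise oriented. -/
def CWOriented (A₁ A₂ A₃ : Set Plane) : Prop :=
  ∃ a₁ ∈ A₁ ∩ frontier (convexHull ℝ (A₁ ∪ A₂ ∪ A₃)),
  ∃ a₂ ∈ A₂ ∩ frontier (convexHull ℝ (A₁ ∪ A₂ ∪ A₃)),
  ∃ a₃ ∈ A₃ ∩ frontier (convexHull ℝ (A₁ ∪ A₂ ∪ A₃)),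
    det2 (a₂ - a₁) (a₃ - a₁) < 0

/-- An affine line in the plane: an affine subspace with 1-dimensional direction. -/
def IsLine (L : AffineSubspace ℝ Plane) : Prop := Module.finrank ℝ L.direction = 1

/-- `L` is a transversal line of the family `F`. -/
def TransversalLine (L : AffineSubspace ℝ Plane) (F : Set (Set Plane)) : Prop :=
  IsLine L ∧ ∀ A ∈ F, ((L : Set Plane) ∩ A).Nonempty

lemma face_mem {B C : Set Plane} (hB : Convex ℝ B) (hC : Convex ℝ C) (hBn : B.Nonempty)
    (hCn : C.Nonempty) (f : Plane →L[ℝ] ℝ) (m : ℝ) (h1 : ∀ b ∈ B, f b ≤ m)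
    (h2 : ∀ c ∈ C, f c < m) {x : Plane} (hx : x ∈ convexHull ℝ (B ∪ C)) (hm : m ≤ f x) :
    x ∈ B := by
  rw [convexHull_union hBn hCn, hB.convexHull_eq, hC.convexHull_eq, mem_convexJoin] at hx
  obtain ⟨b, hb, c, hc, α, β, hα, hβ, hs, rfl⟩ := hx
  have := h1 b hb
  have h3 := h2 c hc
  simp only [map_add, map_smul, smul_eq_mul] at hm
  have : β = 0 := by
    by_contra hne
    have hpos : 0 < β := lt_of_le_of_ne hβ (Ne.symm hne)
    have hα' : α = 1 - β := by linarith
    subst hα'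
    nlinarith
  subst this
  have : α = 1 := by linarith
  subst this
  simpa using hb

lemma hull_le {S : Set Plane} (f : Plane →L[ℝ] ℝ) (m : ℝ) (h : ∀ b ∈ S, f b ≤ m) :
    ∀ x ∈ convexHull ℝ S, f x ≤ m := by
  have : convexHull ℝ S ⊆ {x | f x ≤ m} :=
    convexHull_min h (convex_halfSpace_le f.toLinearMap.isLinear m)
  exact fun x hx => this hx

lemma leg {B C : Set Plane} (hB : IsCompact B) (hC : IsCompact C) (hBn : B.Nonempty)
    (hCn : C.Nonempty) (f g : Plane →L[ℝ] ℝ)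
    (h1 : sSup (f '' C) ≤ sSup (f '' B)) (h2 : sSup (g '' B) ≤ sSup (g '' C)) :
    ∃ t ∈ Icc (0:ℝ) 1, ∃ p ∈ B, ∃ c ∈ C,
      ((1 - t) • f + t • g) p = ((1 - t) • f + t • g) c ∧
      (∀ b ∈ B, ((1 - t) • f + t • g) b ≤ ((1 - t) • f + t • g) p) ∧
      (∀ b ∈ C, ((1 - t) • f + t • g) b ≤ ((1 - t) • f + t • g) p) := by
  let F : ℝ → Plane → ℝ := fun t x => ((1 - t) • f + t • g) x
  have hF : Continuous (Function.uncurry F) := by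
    simp only [F, Function.uncurry_def]
    simp only [ContinuousLinearMap.add_apply, ContinuousLinearMap.smul_apply]
    fun_prop
  have cB := hB.continuous_sSup (f := F) hF
  have cC := hC.continuous_sSup (f := F) hF
  have hd : Continuous fun t => sSup (F t '' B) - sSup (F t '' C) := cB.sub cC
  have hF0 : F 0 = f := by ext x; simp [F]
  have hF1 : F 1 = g := by ext x; simp [F]
  have := intermediate_value_Icc' (zero_le_one (α := ℝ)) hd.continuousOn
  obtain ⟨t, ht, ht0⟩ := this (show (0:ℝ) ∈ _ by
    constructor
    · simp only [hF1]; linarith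
    · simp only [hF0]; linarith)
  have cont : Continuous (F t) := by
    simp only [F]; fun_prop
  obtain ⟨p, hp, hpe, hpm⟩ := hB.exists_sSup_image_eq_and_ge hBn cont.continuousOn
  obtain ⟨c, hc, hce, hcm⟩ := hC.exists_sSup_image_eq_and_ge hCn cont.continuousOn
  have e : F t p = F t c := by
    simp only at ht0
    linarith
  exact ⟨t, ht, p, hp, c, hc, e, hpm, fun b hb => (hcm b hb).trans e.ge⟩

lemma core2 {A B C : Set Plane} (hA : Convex ℝ A)
    (hB : Convex ℝ B) (hBc : IsCompact B) (hC : Convex ℝ C) (hCc : IsCompact C)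
    (hCn : C.Nonempty)
    (hline : ∀ f : Plane →ₗ[ℝ] ℝ, f ≠ 0 → ∀ c : ℝ,
      ¬ (TangentLineTo f c A ∧ TangentLineTo f c B ∧ TangentLineTo f c C))
    (hAK : A ⊆ convexHull ℝ (B ∪ C)) (hBi : (interior B).Nonempty)
    (n u0 : Plane →L[ℝ] ℝ) {a x z : Plane} (haA : a ∈ A) (haB : a ∈ B)
    (hn : ∀ y ∈ B, n y ≤ n a → y ∈ A) (hzB : z ∈ B) (hz : n a < n z)
    (hu0 : ∀ y ∈ B, u0 y ≤ u0 a) (hu0C : ∀ y ∈ C, u0 y < u0 a)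
    (hxA : x ∈ A) (hxB : x ∉ B) (hnx : n x = n a) (hux : u0 x < u0 a) : False := by
  have hBn : B.Nonempty := ⟨a, haB⟩
  -- final contradiction
  have fin : ∀ (v : Plane →L[ℝ] ℝ) (p c : Plane), v ≠ 0 → p ∈ A → p ∈ B → c ∈ C →
      v p = v c → (∀ b ∈ B, v b ≤ v p) → (∀ b ∈ C, v b ≤ v p) → False := by
    intro v p c hv hpA hpB hc hpc h1 h2
    refine hline v.toLinearMap (fun h => hv (by ext y; exact DFunLike.congr_fun h y)) (v p)
      ⟨⟨⟨p, hpA, rfl⟩, Or.inl ?_⟩, ⟨⟨p, hpB, rfl⟩, Or.inl h1⟩, ⟨⟨c, hc, hpc.symm⟩, Or.inl h2⟩⟩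
    intro y hy
    exact hull_le v (v p) (fun b hb => hb.elim (h1 b) (h2 b)) y (hAK hy)
  -- last point of `B` on the segment
  have hcomp : IsCompact (B ∩ segment ℝ a x) :=
    hBc.inter_right (by
      rw [← convexHull_pair]
      exact (Set.Finite.isCompact_convexHull (𝕜 := ℝ) (Set.toFinite {a, x})).isClosed)
  obtain ⟨b0, ⟨hb0B, hb0s⟩, hb0⟩ := hcomp.exists_isMinOn ⟨a, haB, left_mem_segment ℝ a x⟩
    u0.continuous.continuousOn
  have hb0A : b0 ∈ A := hA.segment_subset haA hxA hb0s
  have hnseg : ∀ y ∈ segment ℝ a x, n y = n a := by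
    rintro y ⟨α, β, hα, hβ, hs, rfl⟩
    simp only [map_add, map_smul, smul_eq_mul, hnx]
    rw [← add_mul, hs, one_mul]
  have hnb0 := hnseg b0 hb0s
  have hux' : u0 x < u0 b0 := by
    obtain ⟨α, β, hα, hβ, hs, rfl⟩ := hb0s
    simp only [map_add, map_smul, smul_eq_mul]
    have : α ≠ 0 := by
      rintro rfl
      have : β = 1 := by linarith
      subst this
      apply hxB
      simpa using hb0B
    have hpos : 0 < α := lt_of_le_of_ne hα (Ne.symm this)
    have hβ' : β = 1 - α := by linarith
    subst hβ'
    nlinarith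
  have hdisj : Disjoint (interior B) (openSegment ℝ b0 x) := by
    rw [Set.disjoint_left]
    intro y hyB hy
    have hyB := interior_subset hyB
    have hys : y ∈ segment ℝ a x :=
      (convex_segment a x).segment_subset hb0s (right_mem_segment ℝ a x)
        (openSegment_subset_segment ℝ _ _ hy)
    have h1 := hb0 ⟨hyB, hys⟩
    obtain ⟨α, β, hα, hβ, hs, rfl⟩ := hy
    simp only [Set.mem_setOf_eq, map_add, map_smul, smul_eq_mul] at h1
    have hα' : α = 1 - β := by linarith
    subst hα'
    nlinarith
  obtain ⟨w, m, hw1, hw2⟩ := geometric_hahn_banach_open hB.interior isOpen_interior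
    (convex_openSegment b0 x) hdisj
  have hwB : ∀ y ∈ B, w y ≤ m := by
    have h : closure (interior B) ⊆ {y | w y ≤ m} :=
      closure_minimal (fun y hy => (hw1 y hy).le)
        (isClosed_le w.continuous continuous_const)
    rw [hB.closure_interior_eq_closure_of_nonempty_interior hBi] at h
    exact fun y hy => h (subset_closure hy)
  have hwS : ∀ y ∈ segment ℝ b0 x, m ≤ w y := by
    have h : closure (openSegment ℝ b0 x) ⊆ {y | m ≤ w y} :=
      closure_minimal (fun y hy => hw2 y hy)
        (isClosed_le continuous_const w.continuous)
    exact fun y hy => h (segment_subset_closure_openSegment hy)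
  have hwb0 : w b0 = m := le_antisymm (hwB b0 hb0B) (hwS b0 (left_mem_segment ℝ _ _))
  have hwx : m ≤ w x := hwS x (right_mem_segment ℝ _ _)
  have hw0 : w ≠ 0 := by
    rintro rfl
    obtain ⟨y, hy⟩ := hBi
    have := hw1 y hy
    simp at this hwb0
    linarith
  have bdd : ∀ (f : Plane →L[ℝ] ℝ), BddAbove (f '' C) := fun f =>
    (hCc.image f.continuous).bddAbove
  have bddB : ∀ (f : Plane →L[ℝ] ℝ), BddAbove (f '' B) := fun f =>
    (hBc.image f.continuous).bddAbove
  have hgw : sSup (w '' B) ≤ sSup (w '' C) := by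
    have h1 : sSup (w '' B) ≤ m := csSup_le (hBn.image _) (by rintro _ ⟨y, hy, rfl⟩; exact hwB y hy)
    refine h1.trans ?_
    by_contra hcon
    push Not at hcon
    exact hxB (face_mem hB hC hBn hCn w m hwB
      (fun c hc => (le_csSup (bdd w) ⟨c, hc, rfl⟩).trans_lt hcon) (hAK hxA) hwx)
  have hgu : sSup (u0 '' C) ≤ sSup (u0 '' B) := by
    refine csSup_le (hCn.image _) ?_
    rintro _ ⟨y, hy, rfl⟩
    exact (hu0C y hy).le.trans (le_csSup (bddB u0) ⟨a, haB, rfl⟩)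
  rcases le_total (sSup ((-n) '' B)) (sSup ((-n) '' C)) with hcase | hcase
  · obtain ⟨t, ht, p, hp, c, hc, hpc, h1, h2⟩ := leg hBc hCc hBn hCn u0 (-n) hgu hcase
    have ht0 : 0 < t := by
      refine lt_of_le_of_ne ht.1 ?_
      rintro rfl
      simp at hpc h1
      have := h1 a haB
      have := hu0C c hc
      linarith
    have ha := h1 a haB
    have hup := hu0 p hp
    have ht1 := ht.2
    refine fin _ p c ?_ (hn p hp ?_) hp hc hpc h1 h2
    · intro h0
      have e1 := DFunLike.congr_fun h0 x
      have e2 := DFunLike.congr_fun h0 a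
      have e3 := DFunLike.congr_fun h0 z
      simp at e1 e2 e3
      rw [hnx] at e1
      have : (1 - t) * (u0 x - u0 a) = 0 := by linarith
      rcases mul_eq_zero.1 this with h | h
      · have : t = 1 := by linarith
        subst this
        linarith
      · linarith
    · simp at ha
      nlinarith
  · obtain ⟨t, ht, p, hp, c, hc, hpc, h1, h2⟩ := leg hBc hCc hBn hCn (-n) w hcase hgw
    have hb := h1 b0 hb0B
    have hwp := hwB p hp
    have ht1 := ht.2
    have ht0 := ht.1
    rcases eq_or_lt_of_le ht1 with rfl | hlt
    · simp at hb hpc h1 h2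
      have e : w p = w b0 := by linarith
      exact fin w b0 c hw0 hb0A hb0B hc (by linarith) (fun y hy => by linarith [h1 y hy])
        (fun y hy => by linarith [h2 y hy])
    · refine fin _ p c ?_ (hn p hp ?_) hp hc hpc h1 h2
      · intro h0
        have e2 := DFunLike.congr_fun h0 b0
        have e3 := DFunLike.congr_fun h0 z
        simp at e2 e3
        have := hwB z hzB
        have : (1 - t) * (n z - n a) ≤ 0 := by
          rw [hnb0, hwb0] at e2
          nlinarith
        nlinarith
      · simp at hb
        rw [hnb0, hwb0] at hb
        have : 0 ≤ (1 - t) * (n a - n p) := by nlinarith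
        have := nonneg_of_mul_nonneg_right this (by linarith)
        linarith

/-- `det2 e` as a continuous functional -/
def detF (e : Plane) : Plane →L[ℝ] ℝ :=
  e 0 • EuclideanSpace.proj 1 - e 1 • EuclideanSpace.proj 0

lemma detF_apply (e z : Plane) : detF e z = e 0 * z 1 - e 1 * z 0 := by
  simp [detF]

lemma parallel_of_detF {e z : Plane} (he : e ≠ 0) (h : detF e z = 0) : ∃ s : ℝ, z = s • e := by
  rw [detF_apply] at h
  by_cases h0 : e 0 = 0
  · have h1 : e 1 ≠ 0 := by
      intro h1
      apply he
      ext i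
      fin_cases i <;> simp [h0, h1]
    refine ⟨z 1 / e 1, ?_⟩
    have : z 0 = 0 := by
      rw [h0] at h
      simpa [h1] using h
    ext i
    fin_cases i
    · simp [h0, this]
    · simp; field_simp
  · refine ⟨z 0 / e 0, ?_⟩
    ext i
    fin_cases i
    · simp; field_simp
    · simp; field_simp; linarith

lemma core1 {A B C : Set Plane} (hA : Convex ℝ A)
    (hB : Convex ℝ B) (hBc : IsCompact B) (hC : Convex ℝ C) (hCc : IsCompact C)
    (hCn : C.Nonempty) (hBn : B.Nonempty)
    (hline : ∀ f : Plane →ₗ[ℝ] ℝ, f ≠ 0 → ∀ c : ℝ,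
      ¬ (TangentLineTo f c A ∧ TangentLineTo f c B ∧ TangentLineTo f c C))
    (hAK : A ⊆ convexHull ℝ (B ∪ C)) (hnc : NoncrossingPair A B) (htan : ¬ TangentBodies A B)
    (u0 : Plane →L[ℝ] ℝ) {a : Plane} (haA : a ∈ A)
    (hu0 : ∀ y ∈ B, u0 y ≤ u0 a) (hu0C : ∀ y ∈ C, u0 y < u0 a) : False := by
  have haB : a ∈ B := face_mem hB hC hBn hCn u0 _ hu0 hu0C (hAK haA) le_rfl
  have hBi : (interior B).Nonempty := by
    by_contra h
    rw [Set.not_nonempty_iff_eq_empty] at h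
    exact htan ⟨⟨a, haA, haB⟩, by simp [h]⟩
  obtain ⟨x, hxA, hxB⟩ := hnc.1.nonempty
  obtain ⟨z, hzB, hzA⟩ := hnc.2.nonempty
  have hux : u0 x < u0 a := by
    by_contra h
    push Not at h
    exact hxB (face_mem hB hC hBn hCn u0 _ hu0 hu0C (hAK hxA) h)
  set e := x - a with he
  have he0 : e ≠ 0 := by
    intro h
    apply hxB
    rw [sub_eq_zero.1 h]
    exact haB
  set n := detF e with hn
  have hne : n e = 0 := by rw [hn, detF_apply]; ring
  have hnx : n x = n a := by
    rw [he, map_sub] at hne; linarith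
  have honl : ∀ y ∈ B, n y = n a → y ∈ A := by
    intro y hy hny
    obtain ⟨s, hs⟩ := parallel_of_detF he0 (show detF e (y - a) = 0 by
      rw [map_sub]; exact sub_eq_zero.2 hny)
    have hy' : y = a + s • e := by rw [← hs]; abel
    have hs0 : 0 ≤ s := by
      by_contra hneg
      push Not at hneg
      have h1 := hu0 y hy
      rw [hy', he] at h1
      simp only [map_add, map_smul, map_sub, smul_eq_mul] at h1
      nlinarith
    rcases le_or_gt s 1 with h1 | h1
    · have : y ∈ segment ℝ a x := by
        refine ⟨1 - s, s, by linarith, hs0, by ring, ?_⟩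
        rw [hy', he]; module
      exact hA.segment_subset haA hxA this
    · exfalso
      apply hxB
      have hsp : s ≠ 0 := by linarith
      have : x ∈ segment ℝ a y := by
        refine ⟨1 - s⁻¹, s⁻¹, ?_, by positivity, by ring, ?_⟩
        · rw [sub_nonneg]; exact inv_le_one_of_one_le₀ h1.le
        · rw [hy', smul_add, smul_smul, inv_mul_cancel₀ hsp, he]; module
      exact hB.segment_subset haB hy this
  have hconn : ((fun y => n y) '' (B \ A)).OrdConnected :=
    (hnc.2.isPreconnected.image _ n.continuous.continuousOn).ordConnected
  have hnot : n a ∉ (fun y => n y) '' (B \ A) := by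
    rintro ⟨y, ⟨hyB, hyA⟩, hy⟩
    exact hyA (honl y hyB hy)
  have hzne : n z ≠ n a := fun h => hzA (honl z hzB h)
  rcases lt_or_gt_of_ne hzne with hlt | hgt
  · refine core2 hA hB hBc hC hCc hCn hline hAK hBi (-n) u0 haA haB ?_ hzB ?_ hu0 hu0C hxA hxB
      ?_ hux
    · intro y hy hny
      by_contra hyA
      simp at hny
      exact hnot (hconn.out ⟨z, ⟨hzB, hzA⟩, rfl⟩ ⟨y, ⟨hy, hyA⟩, rfl⟩ ⟨hlt.le, hny⟩)
    · simpa using hlt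
    · simpa using hnx
  · refine core2 hA hB hBc hC hCc hCn hline hAK hBi n u0 haA haB ?_ hzB hgt hu0 hu0C hxA hxB
      hnx hux
    intro y hy hny
    by_contra hyA
    exact hnot (hconn.out ⟨y, ⟨hy, hyA⟩, rfl⟩ ⟨z, ⟨hzB, hzA⟩, rfl⟩ ⟨hny, hgt.le⟩)

lemma exists_support {K : Set Plane} (hK : Convex ℝ K) {a : Plane} (haK : a ∈ K)
    (ha : a ∈ frontier K) : ∃ f : Plane →L[ℝ] ℝ, f ≠ 0 ∧ ∀ y ∈ K, f y ≤ f a := by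
  by_cases hi : (interior K).Nonempty
  · obtain ⟨f, hf⟩ := geometric_hahn_banach_open_point hK.interior isOpen_interior ha.2
    refine ⟨f, ?_, ?_⟩
    · rintro rfl
      obtain ⟨y, hy⟩ := hi
      simpa using hf y hy
    · have h : closure (interior K) ⊆ {y | f y ≤ f a} :=
        closure_minimal (fun y hy => (hf y hy).le)
          (isClosed_le f.continuous continuous_const)
      rw [hK.closure_interior_eq_closure_of_nonempty_interior hi] at h
      exact fun y hy => h (subset_closure hy)
  · rw [hK.interior_nonempty_iff_affineSpan_eq_top] at hi
    have hdir : (affineSpan ℝ K).direction < ⊤ := by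
      rw [lt_top_iff_ne_top]
      intro h
      exact hi ((AffineSubspace.direction_eq_top_iff_of_nonempty
        ⟨a, subset_affineSpan ℝ K haK⟩).1 h)
    obtain ⟨f, hf0, hf⟩ := Submodule.exists_le_ker_of_lt_top _ hdir
    refine ⟨LinearMap.toContinuousLinearMap f, ?_, ?_⟩
    · intro h
      apply hf0
      ext y
      exact DFunLike.congr_fun h y
    · intro y hy
      have := hf (AffineSubspace.vsub_mem_direction (subset_affineSpan ℝ K hy)
        (subset_affineSpan ℝ K haK))
      simp only [vsub_eq_sub, LinearMap.mem_ker, map_sub] at this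
      simp only [LinearMap.coe_toContinuousLinearMap']
      linarith

lemma core {A B C : Set Plane} (hA : ConvexBody2 A) (hB : ConvexBody2 B) (hC : ConvexBody2 C)
    (hline : ∀ f : Plane →ₗ[ℝ] ℝ, f ≠ 0 → ∀ c : ℝ,
      ¬ (TangentLineTo f c A ∧ TangentLineTo f c B ∧ TangentLineTo f c C))
    (hAB : NoncrossingPair A B) (hAC : NoncrossingPair A C)
    (tAB : ¬ TangentBodies A B) (tAC : ¬ TangentBodies A C)
    (hAK : A ⊆ convexHull ℝ (B ∪ C)) {a : Plane} (haA : a ∈ A)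
    (ha : a ∈ frontier (convexHull ℝ (B ∪ C))) : False := by
  obtain ⟨f, hf0, hf⟩ := exists_support (convex_convexHull ℝ _) (hAK haA) ha
  have hfB : ∀ y ∈ B, f y ≤ f a := fun y hy => hf y (subset_convexHull ℝ _ (Or.inl hy))
  have hfC : ∀ y ∈ C, f y ≤ f a := fun y hy => hf y (subset_convexHull ℝ _ (Or.inr hy))
  by_cases h1 : ∃ y ∈ B, f y = f a
  · by_cases h2 : ∃ y ∈ C, f y = f a
    · exact hline f.toLinearMap (fun h => hf0 (by ext y; exact DFunLike.congr_fun h y)) (f a)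
        ⟨⟨⟨a, haA, rfl⟩, Or.inl fun y hy => hf y (hAK hy)⟩, ⟨h1, Or.inl hfB⟩, ⟨h2, Or.inl hfC⟩⟩
    · push Not at h2
      exact core1 hA.2.2 hB.2.2 hB.2.1 hC.2.2 hC.2.1 hC.1 hB.1 hline hAK hAB tAB f haA hfB
        (fun y hy => lt_of_le_of_ne (hfC y hy) (h2 y hy))
  · push Not at h1
    exact core1 hA.2.2 hC.2.2 hC.2.1 hB.2.2 hB.2.1 hB.1 hC.1
      (fun f hf c h => hline f hf c ⟨h.1, h.2.2, h.2.1⟩)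
      (by rwa [union_comm]) hAC tAC f haA hfC
        (fun y hy => lt_of_le_of_ne (hfB y hy) (h1 y hy))

lemma hull_closed {B C : Set Plane} (hB : ConvexBody2 B) (hC : ConvexBody2 C) :
    IsClosed (convexHull ℝ (B ∪ C)) := by
  have e : convexHull ℝ (B ∪ C) =
      (fun q : ℝ × Plane × Plane => (1 - q.1) • q.2.1 + q.1 • q.2.2) '' (Icc (0:ℝ) 1 ×ˢ B ×ˢ C) := by
    rw [convexHull_union hB.1 hC.1, hB.2.2.convexHull_eq, hC.2.2.convexHull_eq]
    ext x
    rw [mem_convexJoin]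
    constructor
    · rintro ⟨b, hb, c, hc, α, β, hα, hβ, hs, rfl⟩
      refine ⟨(β, b, c), ⟨⟨hβ, by linarith⟩, hb, hc⟩, ?_⟩
      simp only
      rw [← hs, add_sub_cancel_right]
    · rintro ⟨⟨t, b, c⟩, ⟨ht, hb, hc⟩, rfl⟩
      exact ⟨b, hb, c, hc, 1 - t, t, by linarith [ht.2], ht.1, by ring, rfl⟩
  rw [e]
  exact ((isCompact_Icc.prod (hB.2.1.prod hC.2.1)).image (by fun_prop)).isClosed

/-- If `A` is needed for the hull, it has an exposed point. -/
lemma exposed {A B C : Set Plane} (hA : ConvexBody2 A) (hB : ConvexBody2 B) (hC : ConvexBody2 C)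
    (h : ¬ A ⊆ convexHull ℝ (B ∪ C)) :
    ∃ a ∈ A, a ∈ frontier (convexHull ℝ (A ∪ B ∪ C)) ∧ ∃ f : Plane →L[ℝ] ℝ,
      (∀ y ∈ B, f y < f a) ∧ (∀ y ∈ C, f y < f a) := by
  obtain ⟨x, hxA, hx⟩ := Set.not_subset.1 h
  obtain ⟨f, m, h1, h2⟩ := geometric_hahn_banach_closed_point (convex_convexHull ℝ (B ∪ C))
    (hull_closed hB hC) hx
  obtain ⟨a, haA, ha⟩ := hA.2.1.exists_isMaxOn hA.1 f.continuous.continuousOn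
  have hm : m < f a := h2.trans_le (ha hxA)
  have hfB : ∀ y ∈ B, f y < f a := fun y hy =>
    (h1 y (subset_convexHull ℝ _ (Or.inl hy))).trans hm
  have hfC : ∀ y ∈ C, f y < f a := fun y hy =>
    (h1 y (subset_convexHull ℝ _ (Or.inr hy))).trans hm
  have haK : a ∈ convexHull ℝ (A ∪ B ∪ C) := subset_convexHull ℝ _ (Or.inl (Or.inl haA))
  have hle : ∀ y ∈ convexHull ℝ (A ∪ B ∪ C), f y ≤ f a := by
    refine hull_le f _ ?_
    rintro y ((hy | hy) | hy)
    · exact ha hy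
    · exact (hfB y hy).le
    · exact (hfC y hy).le
  refine ⟨a, haA, ⟨subset_closure haK, ?_⟩, f, hfB, hfC⟩
  intro hmem
  obtain ⟨b, hb⟩ := hB.1
  -- move from `a` away from `b`
  have hcont : Filter.Tendsto (fun t : ℝ => a + t • (a - b)) (nhds 0) (nhds a) := by
    have : Continuous (fun t : ℝ => a + t • (a - b)) := by fun_prop
    simpa using this.tendsto 0
  have hev := hcont (mem_interior_iff_mem_nhds.1 hmem)
  obtain ⟨ε, hε, hball⟩ := Metric.mem_nhds_iff.1 hev
  have := hball (show ε / 2 ∈ Metric.ball (0:ℝ) ε by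
    simp [abs_of_pos hε]; linarith)
  have := hle _ this
  simp only [map_add, map_smul, map_sub, smul_eq_mul] at this
  have := hfB b hb
  nlinarith

lemma hull_ne_iff {A B C : Set Plane} (hB : A ≠ B) (hC : A ≠ C) :
    convexHull ℝ (⋃₀ {A, B, C}) ≠ convexHull ℝ (⋃₀ ({A, B, C} \ {A})) ↔
      ¬ A ⊆ convexHull ℝ (B ∪ C) := by
  have e1 : ({A, B, C} : Set (Set Plane)) \ {A} = {B, C} := by
    ext X
    simp only [mem_diff, mem_insert_iff, mem_singleton_iff]
    constructor
    · tauto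
    · rintro (rfl | rfl) <;> simp [hB.symm, hC.symm]
  rw [e1]
  simp only [sUnion_insert, sUnion_singleton, ne_eq, not_iff_not]
  constructor
  · intro h
    rw [← h]
    exact subset_union_left.trans (subset_convexHull ℝ _)
  · intro h
    apply subset_antisymm
    · exact convexHull_min (union_subset h (subset_convexHull ℝ _)) (convex_convexHull ℝ _)
    · exact convexHull_mono subset_union_right

lemma convexPos_iff {A B C : Set Plane} (hAB : A ≠ B) (hBC : B ≠ C) (hAC : A ≠ C) :
    ConvexPos {A, B, C} ↔ ¬ A ⊆ convexHull ℝ (B ∪ C) ∧ ¬ B ⊆ convexHull ℝ (A ∪ C) ∧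
      ¬ C ⊆ convexHull ℝ (A ∪ B) := by
  rw [← hull_ne_iff hAB hAC, ← hull_ne_iff hAB.symm hBC, ← hull_ne_iff hAC.symm hBC.symm]
  have e1 : ({B, A, C} : Set (Set Plane)) = {A, B, C} := by ext; simp; tauto
  have e2 : ({C, A, B} : Set (Set Plane)) = {A, B, C} := by ext; simp; tauto
  rw [e1, e2]
  unfold ConvexPos
  simp only [mem_insert_iff, mem_singleton_iff, forall_eq_or_imp, forall_eq]

lemma hull_drop {A B C : Set Plane} (h : A ⊆ convexHull ℝ (B ∪ C)) :
    convexHull ℝ (A ∪ B ∪ C) = convexHull ℝ (B ∪ C) := by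
  apply subset_antisymm
  · rw [union_assoc]
    exact convexHull_min (union_subset h (subset_convexHull ℝ _)) (convex_convexHull ℝ _)
  · apply convexHull_mono
    rw [union_assoc]
    exact subset_union_right

lemma NoncrossingPair.symm {A B : Set Plane} (h : NoncrossingPair A B) : NoncrossingPair B A :=
  ⟨h.2, h.1⟩

lemma TangentBodies.symm {A B : Set Plane} (h : TangentBodies A B) : TangentBodies B A :=
  ⟨by rw [inter_comm]; exact h.1, by rw [inter_comm]; exact h.2⟩

lemma noncollinear {a b c : Plane} (fa fb fc : Plane →L[ℝ] ℝ)
    (hab : fa b < fa a) (hac : fa c < fa a) (hba : fb a < fb b) (hbc : fb c < fb b)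
    (hca : fc a < fc c) (hcb : fc b < fc c) : det2 (b - a) (c - a) ≠ 0 := by
  intro h
  have hne : b - a ≠ 0 := by
    intro h0
    rw [sub_eq_zero.1 h0] at hab
    exact lt_irrefl _ hab
  obtain ⟨s, hs⟩ := parallel_of_detF hne (z := c - a) (by rw [detF_apply]; exact h)
  have hc : c = a + s • (b - a) := by rw [← hs]; abel
  rw [hc] at hac hbc hca hcb
  simp only [map_add, map_smul, map_sub, smul_eq_mul] at hac hbc hca hcb
  have h1 : 0 < s := by
    by_contra hh; push Not at hh; nlinarith
  have h2 : s < 1 := by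
    by_contra hh; push Not at hh; nlinarith
  have e1 : 0 < s * (fc b - fc a) := by linarith
  have e2 := pos_of_mul_pos_right e1 h1.le
  nlinarith

theorem triple_convexPos_iff_oriented (A B C : Set Plane)
    (hAB : A ≠ B) (hBC : B ≠ C) (hAC : A ≠ C)
    (hbody : ConvexBody2 A ∧ ConvexBody2 B ∧ ConvexBody2 C)
    (hnc : NoncrossingPair A B ∧ NoncrossingPair B C ∧ NoncrossingPair A C)
    (htan : ¬ TangentBodies A B ∧ ¬ TangentBodies B C ∧ ¬ TangentBodies A C)
    (hline : ∀ f : Plane →ₗ[ℝ] ℝ, f ≠ 0 → ∀ c : ℝ,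
      ¬ (TangentLineTo f c A ∧ TangentLineTo f c B ∧ TangentLineTo f c C)) :
    ConvexPos {A, B, C} ↔ (CWOriented A B C ∨ CCWOriented A B C) := by
  obtain ⟨bA, bB, bC⟩ := hbody
  obtain ⟨nAB, nBC, nAC⟩ := hnc
  obtain ⟨tAB, tBC, tAC⟩ := htan
  have p1 : B ∪ A ∪ C = A ∪ B ∪ C := by rw [union_comm B A]
  have p2 : C ∪ A ∪ B = A ∪ B ∪ C := by rw [union_assoc, union_comm]
  rw [convexPos_iff hAB hBC hAC]
  constructor
  · rintro ⟨h1, h2, h3⟩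
    obtain ⟨a, haA, ha, fa, hab, hac⟩ := exposed bA bB bC h1
    obtain ⟨b, hbB, hb, fb, hba, hbc⟩ := exposed bB bA bC h2
    obtain ⟨c, hcC, hc, fc, hca, hcb⟩ := exposed bC bA bB h3
    rw [p1] at hb
    rw [p2] at hc
    have := noncollinear fa fb fc (hab b hbB) (hac c hcC) (hba a haA) (hbc c hcC)
      (hca a haA) (hcb b hbB)
    rcases lt_or_gt_of_ne this with h | h
    · exact Or.inl ⟨a, ⟨haA, ha⟩, b, ⟨hbB, hb⟩, c, ⟨hcC, hc⟩, h⟩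
    · exact Or.inr ⟨a, ⟨haA, ha⟩, b, ⟨hbB, hb⟩, c, ⟨hcC, hc⟩, h⟩
  · intro h
    obtain ⟨⟨a, haA, ha⟩, ⟨b, hbB, hb⟩, ⟨c, hcC, hc⟩⟩ :
        (A ∩ frontier (convexHull ℝ (A ∪ B ∪ C))).Nonempty ∧
        (B ∩ frontier (convexHull ℝ (A ∪ B ∪ C))).Nonempty ∧
        (C ∩ frontier (convexHull ℝ (A ∪ B ∪ C))).Nonempty := by
      rcases h with ⟨a, ha, b, hb, c, hc, -⟩ | ⟨a, ha, b, hb, c, hc, -⟩ <;>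
        exact ⟨⟨a, ha⟩, ⟨b, hb⟩, ⟨c, hc⟩⟩
    refine ⟨fun h => ?_, fun h => ?_, fun h => ?_⟩
    · rw [hull_drop h] at ha
      exact core bA bB bC hline nAB nAC tAB tAC h haA ha
    · rw [← p1, hull_drop h] at hb
      exact core bB bA bC (fun f hf c h => hline f hf c ⟨h.2.1, h.1, h.2.2⟩) nAB.symm nBC
        (fun h => tAB h.symm) tBC h hbB hb
    · rw [← p2, hull_drop h] at hc
      exact core bC bA bB (fun f hf c h => hline f hf c ⟨h.2.1, h.2.2, h.1⟩) nAC.symm nBC.symm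
        (fun h => tAC h.symm) (fun h => tBC h.symm) h hcC hc
end
end

section
/- Let F be a finite family of at least three pairwise distinct nonempty compact convex subsets of ℝ² such that no three distinct members of F admit a common transversal line. Suppose that for each A ∈ F a point x_A ∈ A is chosen, that the points x_A are pairwise distinct, and that the point set {x_A : A ∈ F} is in convex position, i.e., for every A ∈ F the point x_A does not lie in the convex hull of {x_B : B ∈ F, B ≠ A}. Then the family F is in convex position. -/
open Set

noncomputable section

lemma det2_apply (u v : Plane) : det2 u v = u 0 * v 1 - u 1 * v 0 := rfl

lemma exists_dir (u w : Plane) (h : det2 u w = 0) :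
    ∃ v : Plane, v ≠ 0 ∧ (∃ s : ℝ, s • v = u) ∧ ∃ t : ℝ, t • v = w := by
  rw [det2_apply] at h
  by_cases hu : u = 0
  · by_cases hw : w = 0
    · obtain ⟨v, hv⟩ := exists_ne (0 : Plane)
      exact ⟨v, hv, ⟨0, by simp [hu]⟩, ⟨0, by simp [hw]⟩⟩
    · exact ⟨w, hw, ⟨0, by simp [hu]⟩, ⟨1, by simp⟩⟩
  · refine ⟨u, hu, ⟨1, by simp⟩, ?_⟩
    by_cases h0 : u 0 = 0
    · have h1 : u 1 ≠ 0 := by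
        intro h1
        apply hu
        ext i
        fin_cases i
        · simpa using h0
        · simpa using h1
      refine ⟨w 1 / u 1, ?_⟩
      ext i
      fin_cases i
      · simp only [Fin.zero_eta, PiLp.smul_apply, smul_eq_mul]
        field_simp
        linarith
      · simp only [Fin.mk_one, PiLp.smul_apply, smul_eq_mul]
        field_simp
    · refine ⟨w 0 / u 0, ?_⟩
      ext i
      fin_cases i
      · simp only [Fin.zero_eta, PiLp.smul_apply, smul_eq_mul]
        field_simp
      · simp only [Fin.mk_one, PiLp.smul_apply, smul_eq_mul]
        field_simp
        linarith

lemma exists_transversal {A B C : Set Plane} {a b c : Plane} (ha : a ∈ A) (hb : b ∈ B)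
    (hc : c ∈ C) (h : det2 (b - a) (c - a) = 0) :
    ∃ L : AffineSubspace ℝ Plane, TransversalLine L {A, B, C} := by
  obtain ⟨v, hv, ⟨s, hs⟩, ⟨t, ht⟩⟩ := exists_dir _ _ h
  refine ⟨AffineSubspace.mk' a (Submodule.span ℝ {v}), ?_, ?_⟩
  · rw [IsLine, AffineSubspace.direction_mk']
    exact finrank_span_singleton hv
  · intro X hX
    simp only [mem_insert_iff, mem_singleton_iff] at hX
    rcases hX with rfl | rfl | rfl
    · exact ⟨a, by simp, ha⟩
    · refine ⟨b, ?_, hb⟩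
      rw [SetLike.mem_coe, AffineSubspace.mem_mk', vsub_eq_sub]
      exact Submodule.mem_span_singleton.2 ⟨s, hs⟩
    · refine ⟨c, ?_, hc⟩
      rw [SetLike.mem_coe, AffineSubspace.mem_mk', vsub_eq_sub]
      exact Submodule.mem_span_singleton.2 ⟨t, ht⟩

lemma orient_const {A B C : Set Plane} (hA : Convex ℝ A) (hB : Convex ℝ B) (hC : Convex ℝ C)
    (hne : ∀ a ∈ A, ∀ b ∈ B, ∀ c ∈ C, det2 (b - a) (c - a) ≠ 0)
    {a b c a' b' c' : Plane} (ha : a ∈ A) (hb : b ∈ B) (hc : c ∈ C)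
    (ha' : a' ∈ A) (hb' : b' ∈ B) (hc' : c' ∈ C) (h : 0 < det2 (b - a) (c - a)) :
    0 < det2 (b' - a') (c' - a') := by
  by_contra hcon
  push Not at hcon
  have hpre : IsPreconnected (A ×ˢ B ×ˢ C) := (hA.prod (hB.prod hC)).isPreconnected
  have hcont : Continuous (fun p : Plane × Plane × Plane => det2 (p.2.1 - p.1) (p.2.2 - p.1)) := by
    simp only [det2_apply, PiLp.sub_apply]
    fun_prop
  have := hpre.intermediate_value (a := (a', b', c')) (b := (a, b, c))
    ⟨ha', hb', hc'⟩ ⟨ha, hb, hc⟩ hcont.continuousOn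
  obtain ⟨⟨p, q, r⟩, ⟨hp, hq, hr⟩, h0⟩ := this ⟨hcon, h.le⟩
  exact hne p hp q hq r hr h0

lemma exists_three {S : Set Plane} {x : Plane} (hx : x ∈ convexHull ℝ S) :
    ∃ p ∈ S, ∃ q ∈ S, ∃ r ∈ S, ∃ a b c : ℝ, 0 ≤ a ∧ 0 ≤ b ∧ 0 ≤ c ∧ a + b + c = 1 ∧
      a • p + b • q + c • r = x := by
  rw [convexHull_eq_union] at hx
  simp only [mem_iUnion] at hx
  obtain ⟨t, htS, hai, hxt⟩ := hx
  have hcard : t.card ≤ 3 := by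
    have := hai.card_le_finrank_succ
    have h2 := Submodule.finrank_le (vectorSpan ℝ (Set.range ((↑) : t → Plane)))
    simp at this h2
    omega
  have hsub : ∃ p ∈ t, ∃ q ∈ t, ∃ r ∈ t, (t : Set Plane) ⊆ {p, q, r} := by
    have hpos : t.card ≠ 0 := by
      intro h0
      rw [Finset.card_eq_zero] at h0
      simp [h0] at hxt
    have : t.card = 1 ∨ t.card = 2 ∨ t.card = 3 := by omega
    rcases this with h | h | h
    · obtain ⟨p, rfl⟩ := Finset.card_eq_one.1 h
      exact ⟨p, by simp, p, by simp, p, by simp, by simp⟩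
    · obtain ⟨p, q, -, rfl⟩ := Finset.card_eq_two.1 h
      exact ⟨p, by simp, q, by simp, q, by simp, by simp⟩
    · obtain ⟨p, q, r, -, -, -, rfl⟩ := Finset.card_eq_three.1 h
      exact ⟨p, by simp, q, by simp, r, by simp, by simp⟩
  obtain ⟨p, hp, q, hq, r, hr, hs⟩ := hsub
  refine ⟨p, htS hp, q, htS hq, r, htS hr, ?_⟩
  have hx3 := convexHull_mono hs hxt
  rw [convexHull_insert (by simp), convexHull_pair, mem_convexJoin] at hx3
  obtain ⟨p', hp', z, ⟨b, c, hb, hc, hbc, rfl⟩, ⟨a, d, ha, hd, had, rfl⟩⟩ := hx3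
  rw [mem_singleton_iff] at hp'
  subst hp'
  refine ⟨a, d * b, d * c, ha, by positivity, by positivity, ?_, ?_⟩
  · rw [add_assoc, ← mul_add, hbc, mul_one, had]
  · module

lemma seg_det {x p r : Plane} {a b : ℝ} (hab : a + b = 1) (h : a • p + b • r = x) :
    det2 (p - x) (r - x) = 0 := by
  subst h
  obtain rfl : b = 1 - a := by linarith
  simp only [det2_apply, PiLp.sub_apply, PiLp.add_apply, PiLp.smul_apply, smul_eq_mul]
  ring

lemma convex_merge {P : Set Plane} (hP : Convex ℝ P) {p q : Plane} (hp : p ∈ P) (hq : q ∈ P)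
    {a b : ℝ} (ha : 0 ≤ a) (hb : 0 ≤ b) : ∃ z ∈ P, (a + b) • z = a • p + b • q := by
  by_cases h : a + b = 0
  · obtain rfl : a = 0 := by linarith
    obtain rfl : b = 0 := by linarith
    exact ⟨p, hp, by simp⟩
  · refine ⟨(a / (a + b)) • p + (b / (a + b)) • q,
      hP hp hq (by positivity) (by positivity) (by field_simp), ?_⟩
    rw [smul_add, smul_smul, smul_smul, mul_div_cancel₀ _ h, mul_div_cancel₀ _ h]

lemma mem_tri_of_pos {S : Set Plane} {x p q r : Plane} (hp : p ∈ S) (hq : q ∈ S) (hr : r ∈ S)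
    (h1 : 0 < det2 (p - x) (q - x)) (h2 : 0 < det2 (q - x) (r - x))
    (h3 : 0 < det2 (r - x) (p - x)) : x ∈ convexHull ℝ S := by
  set α := det2 (q - x) (r - x) with hα
  set β := det2 (r - x) (p - x) with hβ
  set γ := det2 (p - x) (q - x) with hγ
  have hs : 0 < α + β + γ := by positivity
  have key : (α + β + γ) • x = α • p + β • q + γ • r := by
    rw [hα, hβ, hγ]
    ext i
    fin_cases i <;>
    · simp [det2_apply]
      ring
  obtain ⟨z, hz, hz'⟩ := convex_merge (convex_convexHull ℝ S) (subset_convexHull ℝ S hp)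
    (subset_convexHull ℝ S hq) h2.le h3.le
  obtain ⟨w, hw, hw'⟩ := convex_merge (convex_convexHull ℝ S) hz
    (subset_convexHull ℝ S hr) (add_pos h2 h3).le h1.le
  rw [hz', ← key] at hw'
  rw [← smul_right_injective Plane hs.ne' hw']
  exact hw

lemma tri_dets {x p q r : Plane} {a b c : ℝ} (habc : a + b + c = 1)
    (h : a • p + b • q + c • r = x) :
    b * det2 (p - x) (q - x) = c * det2 (r - x) (p - x) ∧
    c * det2 (q - x) (r - x) = a * det2 (p - x) (q - x) := by
  subst h
  obtain rfl : c = 1 - a - b := by linarith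
  simp only [det2_apply, PiLp.sub_apply, PiLp.add_apply, PiLp.smul_apply, smul_eq_mul]
  constructor <;> ring

lemma det2_swap (u v : Plane) : det2 u v = - det2 v u := by
  simp only [det2_apply]
  ring

/-- If no three members of a family have a common transversal line, then the
family is in convex position whenever chosen representative points are. -/
theorem convexPos_of_representative_points (F : Set (Set Plane)) (hfin : F.Finite)
    (hcard : 3 ≤ F.ncard)
    (hbody : ∀ A ∈ F, ConvexBody2 A)
    (hline : ∀ A ∈ F, ∀ B ∈ F, ∀ C ∈ F, A ≠ B → B ≠ C → A ≠ C →
      ¬ ∃ L : AffineSubspace ℝ Plane, TransversalLine L {A, B, C})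
    (x : Set Plane → Plane)
    (hx : ∀ A ∈ F, x A ∈ A)
    (hxinj : Set.InjOn x F)
    (hxconv : ∀ A ∈ F, x A ∉ convexHull ℝ (x '' (F \ {A}))) :
    ConvexPos F := by
  intro A hA heq
  have hdet : ∀ A ∈ F, ∀ B ∈ F, ∀ C ∈ F, A ≠ B → B ≠ C → A ≠ C →
      ∀ a ∈ A, ∀ b ∈ B, ∀ c ∈ C, det2 (b - a) (c - a) ≠ 0 :=
    fun A hA B hB C hC h1 h2 h3 a ha b hb c hc h0 =>
      hline A hA B hB C hC h1 h2 h3 (exists_transversal ha hb hc h0)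
  have hcv : ∀ A ∈ F, Convex ℝ A := fun A hA => (hbody A hA).2.2
  have hdisj : ∀ B ∈ F, A ≠ B → x A ∉ B := by
    intro B hB hAB hxB
    have : ∃ C ∈ F, C ∉ ({A, B} : Set (Set Plane)) := by
      have := Set.ncard_pair hAB
      exact Set.exists_mem_notMem_of_ncard_lt_ncard (by omega) (Set.toFinite _)
    obtain ⟨C, hC, hCn⟩ := this
    simp only [mem_insert_iff, mem_singleton_iff, not_or] at hCn
    apply hdet A hA B hB C hC hAB (Ne.symm hCn.2) (Ne.symm hCn.1) (x A) (hx A hA) (x A) hxB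
      (x C) (hx C hC)
    simp [det2_apply]
  have hseg : ∀ P ∈ F, ∀ R ∈ F, A ≠ P → A ≠ R → ∀ p ∈ P, ∀ r ∈ R, ∀ a b : ℝ, 0 ≤ a → 0 ≤ b →
      a + b = 1 → a • p + b • r = x A → False := by
    intro P hP R hR hAP hAR p hp r hr a b ha hb hab h
    by_cases hPR : P = R
    · subst hPR
      exact hdisj P hP hAP (h ▸ hcv P hP hp hr ha hb hab)
    · exact hdet A hA P hP R hR hAP hPR hAR _ (hx A hA) p hp r hr (seg_det hab h)
  have hxA : x A ∈ convexHull ℝ (⋃₀ (F \ {A})) :=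
    heq ▸ subset_convexHull ℝ _ ⟨A, hA, hx A hA⟩
  obtain ⟨p, ⟨P, ⟨hP, hPA⟩, hp⟩, q, ⟨Q, ⟨hQ, hQA⟩, hq⟩, r, ⟨R, ⟨hR, hRA⟩, hr⟩,
    a, b, c, ha, hb, hc, habc, h⟩ := exists_three hxA
  have hAP : A ≠ P := fun e => hPA e.symm
  have hAQ : A ≠ Q := fun e => hQA e.symm
  have hAR : A ≠ R := fun e => hRA e.symm
  have hPQ : P ≠ Q := by
    rintro rfl
    obtain ⟨z, hz, hz'⟩ := convex_merge (hcv P hP) hp hq ha hb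
    exact hseg P hP R hR hAP hAR z hz r hr (a + b) c (by positivity) hc habc (by rw [hz', h])
  have hQR : Q ≠ R := by
    rintro rfl
    obtain ⟨z, hz, hz'⟩ := convex_merge (hcv Q hQ) hq hr hb hc
    exact hseg P hP Q hQ hAP hAQ p hp z hz a (b + c) ha (by positivity) (by linarith)
      (by rw [hz', ← h]; abel)
  have hPR : P ≠ R := by
    rintro rfl
    obtain ⟨z, hz, hz'⟩ := convex_merge (hcv P hP) hp hr ha hc
    exact hseg P hP Q hQ hAP hAQ z hz q hq (a + c) b (by positivity) hb (by linarith)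
      (by rw [hz', ← h]; abel)
  have ha' : 0 < a := ha.lt_of_ne' fun h0 =>
    hseg Q hQ R hR hAQ hAR q hq r hr b c hb hc (by linarith) (by rw [← h, h0]; simp)
  have hb' : 0 < b := hb.lt_of_ne' fun h0 =>
    hseg P hP R hR hAP hAR p hp r hr a c ha hc (by linarith) (by rw [← h, h0]; simp)
  have hc' : 0 < c := hc.lt_of_ne' fun h0 =>
    hseg P hP Q hQ hAP hAQ p hp q hq a b ha hb (by linarith) (by rw [← h, h0]; simp)
  obtain ⟨e1, e2⟩ := tri_dets habc h
  have mem : ∀ B ∈ F, A ≠ B → x B ∈ x '' (F \ {A}) :=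
    fun B hB hAB => ⟨B, ⟨hB, fun e => hAB e.symm⟩, rfl⟩
  have tr : ∀ B ∈ F, ∀ C ∈ F, A ≠ B → B ≠ C → A ≠ C → ∀ b ∈ B, ∀ c ∈ C,
      0 < det2 (b - x A) (c - x A) → 0 < det2 (x B - x A) (x C - x A) :=
    fun B hB C hC h1 h2 h3 b hb c hc hpos =>
      orient_const (hcv A hA) (hcv B hB) (hcv C hC) (hdet A hA B hB C hC h1 h2 h3)
        (hx A hA) hb hc (hx A hA) (hx B hB) (hx C hC) hpos
  apply hxconv A hA
  rcases (hdet A hA P hP Q hQ hAP hPQ hAQ _ (hx A hA) p hp q hq).lt_or_gt with hneg | hpos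
  · have n1 : det2 (r - x A) (p - x A) < 0 := by
      by_contra hn
      push Not at hn
      nlinarith [mul_nonneg hc hn, mul_pos_of_neg_of_neg hneg (neg_neg_of_pos hb')]
    have n2 : det2 (q - x A) (r - x A) < 0 := by
      by_contra hn
      push Not at hn
      nlinarith [mul_nonneg hc hn, mul_pos_of_neg_of_neg hneg (neg_neg_of_pos ha')]
    rw [det2_swap, neg_lt_zero] at hneg n1 n2
    exact mem_tri_of_pos (mem Q hQ hAQ) (mem P hP hAP) (mem R hR hAR)
      (tr Q hQ P hP hAQ hPQ.symm hAP q hq p hp hneg)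
      (tr P hP R hR hAP hPR hAR p hp r hr n1)
      (tr R hR Q hQ hAR hQR.symm hAQ r hr q hq n2)
  · have n1 : 0 < det2 (r - x A) (p - x A) :=
      pos_of_mul_pos_right (e1 ▸ mul_pos hb' hpos) hc
    have n2 : 0 < det2 (q - x A) (r - x A) :=
      pos_of_mul_pos_right (e2.symm ▸ mul_pos ha' hpos) hc
    exact mem_tri_of_pos (mem P hP hAP) (mem Q hQ hAQ) (mem R hR hAR)
      (tr P hP Q hQ hAP hPQ hAQ p hp q hq hpos)
      (tr Q hQ R hR hAQ hQR hAR q hq r hr n2)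
      (tr R hR P hP hAR hPR.symm hAP r hr p hp n1)
end
end

section
/- If G is a finite family of nonempty compact convex subsets of ℝ² such that every three members of G admit a common transversal line, then there exist four affine lines in ℝ² such that every member of G intersects at least one of them. -/
open Set

noncomputable section

theorem parity_contra {α : Type*} [DecidableEq α] (X : Finset α) (f g : α → α)
    (hf : ∀ x ∈ X, f x ∈ X) (hff : ∀ x ∈ X, f (f x) = x)
    (hg : ∀ x ∈ X, g x ∈ X) (hgg : ∀ x ∈ X, g (g x) = x) (hgne : ∀ x ∈ X, g x ≠ x)
    (x0 : α) (hx0 : x0 ∈ X) (hfx0 : f x0 = x0) (huniq : ∀ x ∈ X, f x = x → x = x0) : False := by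
  have h1 : ∑ x ∈ X, (1 : ZMod 2) = 0 := by
    apply Finset.sum_involution (fun a _ => g a)
    · intros; decide
    · intro a ha _; exact hgne a ha
    · intro a ha; exact hg a ha
    · intro a ha; exact hgg a ha
  have h2 : ∑ x ∈ X.erase x0, (1 : ZMod 2) = 0 := by
    apply Finset.sum_involution (fun a _ => f a)
    · intros; decide
    · intro a ha _ h
      exact (Finset.mem_erase.1 ha).1 (huniq a (Finset.mem_erase.1 ha).2 h)
    · intro a ha
      rw [Finset.mem_erase] at ha ⊢
      refine ⟨fun h => ha.1 ?_, hf a ha.2⟩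
      rw [← hff a ha.2, h, hfx0]
    · intro a ha; exact hff a (Finset.mem_erase.1 ha).2
  rw [← Finset.add_sum_erase X _ hx0, h2] at h1
  exact absurd h1 (by decide)

def dv (k : Fin 6) : Fin 6 → ℤ :=
  fun i => (if i = k then 1 else 0) - (if i = k + 1 then 1 else 0)

def Simp6 (N : ℤ) (v : Fin 6 → Fin 6 → ℤ) (π : Equiv.Perm (Fin 6)) : Prop :=
  (∀ j, v (j + 1) = v j + dv (π j)) ∧ (∀ j i, -1 ≤ v j i) ∧ (∀ j, ∑ i, v j i = N)

def outer (x : Fin 6 → ℤ) : Fin 6 :=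
  if 1 ≤ x 0 then 0 else if 1 ≤ x 0 + x 1 then 1 else if 1 ≤ x 0 + x 1 + x 2 then 2
  else if 1 ≤ x 0 + x 1 + x 2 + x 3 then 3 else if 1 ≤ x 0 + x 1 + x 2 + x 3 + x 4 then 4 else 5

def lab (l : (Fin 6 → ℤ) → Fin 6) (x : Fin 6 → ℤ) : Fin 6 :=
  open Classical in if ∀ i, 0 ≤ x i then l x else outer x

theorem outer_pos (x : Fin 6 → ℤ) (N : ℤ) (hN : 1 ≤ N) (hx : ∑ i, x i = N) :
    1 ≤ x (outer x) := by
  rw [Fin.sum_univ_six] at hx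
  unfold outer
  split_ifs <;> omega

theorem lab_pos (l : (Fin 6 → ℤ) → Fin 6) (N : ℤ) (hN : 1 ≤ N)
    (hl : ∀ x : Fin 6 → ℤ, (∀ i, 0 ≤ x i) → ∑ i, x i = N → 0 < x (l x))
    (x : Fin 6 → ℤ) (hx : ∑ i, x i = N) : 1 ≤ x (lab l x) := by
  unfold lab
  split_ifs with h
  · exact hl x h hx
  · exact outer_pos x N hN hx

theorem dv_sum (k : Fin 6) : ∑ i, dv k i = 0 := by
  revert k; decide

theorem wvar (w : Fin 6 → ℤ) (p q : Fin 6) (hpq : p ≠ q)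
    (h : ∀ j, w (j + 1) = w j + ((if j = p then 1 else 0) - (if j = q then 1 else 0))) :
    ∀ j k, w j ≤ w k + 1 := by
  have h0 := h 0
  have h1 := h 1
  have h2 := h 2
  have h3 := h 3
  have h4 := h 4
  have h5 := h 5
  simp only [Fin.isValue, show (0 : Fin 6) + 1 = 1 from rfl, show (1 : Fin 6) + 1 = 2 from rfl,
    show (2 : Fin 6) + 1 = 3 from rfl, show (3 : Fin 6) + 1 = 4 from rfl,
    show (4 : Fin 6) + 1 = 5 from rfl, show (5 : Fin 6) + 1 = 0 from rfl] at h0 h1 h2 h3 h4 h5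
  have key : ∀ j : Fin 6, ∀ k : Fin 6, w j ≤ w k + 1 := by
    fin_cases p <;> fin_cases q <;> simp at hpq h0 h1 h2 h3 h4 h5 <;> intro j k <;>
      (have hj : w j = w 0 ∨ w j = w 1 ∨ w j = w 2 ∨ w j = w 3 ∨ w j = w 4 ∨ w j = w 5 := by
        fin_cases j <;> simp) <;>
      (have hk : w k = w 0 ∨ w k = w 1 ∨ w k = w 2 ∨ w k = w 3 ∨ w k = w 4 ∨ w k = w 5 := by
        fin_cases k <;> simp) <;> omega
  exact key

theorem simp_step {N : ℤ} {v : Fin 6 → Fin 6 → ℤ} {π : Equiv.Perm (Fin 6)} (h : Simp6 N v π)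
    (i j : Fin 6) : v (j + 1) i = v j i +
      ((if j = π.symm i then 1 else 0) - (if j = π.symm (i - 1) then 1 else 0)) := by
  have := congrFun (h.1 j) i
  simp only [Pi.add_apply, dv] at this
  rw [this]
  have e1 : (i = π j) ↔ (j = π.symm i) := by
    rw [Equiv.eq_symm_apply]; exact eq_comm
  have e2 : (i = π j + 1) ↔ (j = π.symm (i - 1)) := by
    rw [Equiv.eq_symm_apply, eq_sub_iff_add_eq]; exact eq_comm
  simp only [e1, e2]

theorem simp_var {N : ℤ} {v : Fin 6 → Fin 6 → ℤ} {π : Equiv.Perm (Fin 6)} (h : Simp6 N v π)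
    (i j k : Fin 6) : v j i ≤ v k i + 1 := by
  refine wvar (fun j => v j i) (π.symm i) (π.symm (i - 1)) ?_ (fun j => simp_step h i j) j k
  intro h
  have h2 := π.symm.injective h
  have h3 : ∀ i : Fin 6, i ≠ i - 1 := by decide
  exact h3 i h2

theorem outer_mono (x : Fin 6 → ℤ) (k : Fin 6) (hk : k ≠ 5) :
    outer (x + dv k) ≤ outer x := by
  fin_cases k <;> simp at hk <;> simp [outer, dv] <;> split_ifs <;> omega

def psum (x : Fin 6 → ℤ) (c : Fin 6) : ℤ := ∑ i, if i ≤ c then x i else 0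

theorem psum_add (x y : Fin 6 → ℤ) (c : Fin 6) : psum (x + y) c = psum x c + psum y c := by
  unfold psum
  rw [← Finset.sum_add_distrib]
  refine Finset.sum_congr rfl fun i _ => ?_
  split_ifs <;> simp

theorem psum_dv : ∀ k c : Fin 6, k ≠ 5 → k ≠ c → psum (dv k) c = 0 := by
  unfold psum dv
  decide

theorem outer_eq (x : Fin 6 → ℤ) (c : Fin 6) (hc : c ≠ 5) (h : outer x = c) : 1 ≤ psum x c := by
  subst h
  unfold outer at *
  split_ifs at * <;> simp [psum, Fin.sum_univ_six] <;> omega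

theorem outer_gt (x : Fin 6 → ℤ) (c : Fin 6) (h : c < outer x) : psum x c ≤ 0 := by
  unfold outer at h
  fin_cases c <;> simp [psum, Fin.sum_univ_six] <;> split_ifs at h <;>
    first | omega | (exfalso; revert h; decide)

theorem outer_drop (x : Fin 6 → ℤ) (k c : Fin 6) (hk : k ≠ 5)
    (h1 : outer x = c + 1) (h2 : outer (x + dv k) = c) (hc : c ≠ 5) : k = c := by
  by_contra hkc
  have e1 := outer_eq _ c hc h2
  have e2 := outer_gt x c (by rw [h1]; clear h1 h2 hkc e1; revert c; decide)
  rw [psum_add, psum_dv k c hk hkc] at e1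
  omega

theorem antitone_labels (a1 a2 a3 a4 a5 : Fin 6) (h1 : a2 ≤ a1) (h2 : a3 ≤ a2) (h3 : a4 ≤ a3)
    (h4 : a5 ≤ a4) (h : ∀ k : Fin 6, k ≠ 0 → a1 = k ∨ a2 = k ∨ a3 = k ∨ a4 = k ∨ a5 = k) :
    a1 = 5 ∧ a2 = 4 ∧ a3 = 3 ∧ a4 = 2 ∧ a5 = 1 := by
  have e5 := h 5 (by decide)
  have e4 := h 4 (by decide)
  have e3 := h 3 (by decide)
  have e2 := h 2 (by decide)
  have e1 := h 1 (by decide)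
  have b1 : a1 = 5 := by omega
  have b2 : 4 ≤ a2 := by clear e1 e2 e3 e5 h; omega
  have b3 : 3 ≤ a3 := by clear e1 e2 e4 e5 h; omega
  have b4 : 2 ≤ a4 := by clear e1 e3 e4 e5 h; omega
  have b5 : a5 = 1 := by clear e3 e2 e4 e5 h; omega
  have c4 : a4 = 2 := by clear e3 e1 e4 e5 h; omega
  have c3 : a3 = 3 := by clear e2 e1 e4 e5 h; omega
  have c2 : a2 = 4 := by clear e2 e1 e3 e5 h; omega
  exact ⟨b1, c2, c3, c4, b5⟩

def Door (l : (Fin 6 → ℤ) → Fin 6) (v : Fin 6 → Fin 6 → ℤ) : Prop :=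
  ∀ k, k ≠ 0 → ∃ j, j ≠ 0 ∧ lab l (v j) = k

abbrev Cell := (Fin 6 → Fin 6 → ℤ) × Equiv.Perm (Fin 6)

def flip6 (p : Cell) : Cell :=
  (Function.update p.1 0 (p.1 5 + dv (p.2 0)), (Equiv.swap 0 5).trans p.2)

def rot6 (r : Fin 6) (p : Cell) : Cell :=
  (fun j => p.1 (j + r), (Equiv.addRight r).trans p.2)

theorem simp_flip {N : ℤ} {p : Cell} (h : Simp6 N p.1 p.2)
    (hb : ∀ i, -1 ≤ (p.1 5 + dv (p.2 0)) i) : Simp6 N (flip6 p).1 (flip6 p).2 := by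
  obtain ⟨v, π⟩ := p
  obtain ⟨h1, h2, h3⟩ := h
  simp only [flip6] at *
  have h0 := h1 0
  have h5 := h1 5
  simp only [Fin.isValue, show (0 : Fin 6) + 1 = 1 from rfl,
    show (5 : Fin 6) + 1 = 0 from rfl] at h0 h5
  refine ⟨?_, ?_, ?_⟩
  · intro j
    by_cases hj0 : j = 0
    · subst hj0
      simp only [zero_add, Equiv.trans_apply, Equiv.swap_apply_left, Function.update_self]
      rw [Function.update_of_ne (by decide), h0, h5]
      abel
    by_cases hj5 : j = 5
    · subst hj5
      simp only [show (5 : Fin 6) + 1 = 0 from rfl, Equiv.trans_apply, Equiv.swap_apply_right,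
        Function.update_self]
      rw [Function.update_of_ne (by decide)]
    · have : j + 1 ≠ 0 := by revert j; decide
      rw [Function.update_of_ne this, Function.update_of_ne hj0, h1 j, Equiv.trans_apply,
        Equiv.swap_apply_of_ne_of_ne hj0 hj5]
  · intro j i
    by_cases hj0 : j = 0
    · subst hj0; rw [Function.update_self]; exact hb i
    · rw [Function.update_of_ne hj0]; exact h2 j i
  · intro j
    by_cases hj0 : j = 0
    · subst hj0; rw [Function.update_self]
      simp only [Pi.add_apply, Finset.sum_add_distrib, dv_sum, h3]; simp
    · rw [Function.update_of_ne hj0]; exact h3 j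

theorem door_flip {l : (Fin 6 → ℤ) → Fin 6} {p : Cell} (h : Door l p.1) :
    Door l (flip6 p).1 := by
  intro k hk
  obtain ⟨j, hj, hjk⟩ := h k hk
  exact ⟨j, hj, by simp only [flip6]; rw [Function.update_of_ne hj]; exact hjk⟩

theorem flip_flip6 {N : ℤ} {p : Cell} (h : Simp6 N p.1 p.2) : flip6 (flip6 p) = p := by
  obtain ⟨v, π⟩ := p
  have h5 := h.1 5
  simp only [Fin.isValue, show (5 : Fin 6) + 1 = 0 from rfl] at h5
  simp only [flip6]
  refine Prod.ext ?_ ?_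
  · simp only [Function.update_idem]
    rw [Function.update_of_ne (by decide)]
    simp only [Equiv.trans_apply, Equiv.swap_apply_left]
    rw [← h5, Function.update_eq_self]
  · ext j; simp

theorem flip_back {N : ℤ} {p : Cell} (h : Simp6 N p.1 p.2) :
    ∀ i, -1 ≤ ((flip6 p).1 5 + dv ((flip6 p).2 0)) i := by
  obtain ⟨v, π⟩ := p
  have h5 := h.1 5
  simp only [Fin.isValue, show (5 : Fin 6) + 1 = 0 from rfl] at h5
  simp only [flip6]
  rw [Function.update_of_ne (by decide)]
  simp only [Equiv.trans_apply, Equiv.swap_apply_left]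
  rw [← h5]
  exact h.2.1 0

theorem flip_ne (p : Cell) : flip6 p ≠ p := by
  intro h
  have := congrArg (fun q : Cell => q.2 0) h
  simp [flip6] at this

theorem simp_rot {N : ℤ} {p : Cell} (h : Simp6 N p.1 p.2) (r : Fin 6) :
    Simp6 N (rot6 r p).1 (rot6 r p).2 := by
  refine ⟨fun j => ?_, fun j i => h.2.1 _ i, fun j => h.2.2 _⟩
  have := h.1 (j + r)
  simp only [rot6, Equiv.trans_apply, Equiv.coe_addRight]
  rw [← this, add_right_comm]

theorem rot_rot (p : Cell) (i j : Fin 6) : rot6 i (rot6 j p) = rot6 (i + j) p := by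
  simp only [rot6]
  refine Prod.ext ?_ ?_
  · funext k; simp only [add_assoc]
  · ext k; simp [add_assoc]

theorem rot_zero (p : Cell) : rot6 0 p = p := by
  simp only [rot6]
  refine Prod.ext ?_ ?_
  · funext k; simp
  · ext k; simp

theorem rot_ne (p : Cell) (r : Fin 6) (hr : r ≠ 0) : rot6 r p ≠ p := by
  intro h
  have := congrArg (fun q : Cell => q.2 0) h
  simp [rot6] at this
  exact hr this

theorem door_inj {l : (Fin 6 → ℤ) → Fin 6} {v : Fin 6 → Fin 6 → ℤ} (h : Door l v)
    (a b : Fin 6) (ha : a ≠ 0) (hb : b ≠ 0) (hab : lab l (v a) = lab l (v b)) : a = b := by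
  by_contra hne
  have hsub : (Finset.univ.erase (0 : Fin 6)) ⊆
      (((Finset.univ.erase (0 : Fin 6)).erase a).image (fun j => lab l (v j))) := by
    intro k hk
    obtain ⟨j, hj, hjk⟩ := h k (Finset.ne_of_mem_erase hk)
    rw [Finset.mem_image]
    by_cases hja : j = a
    · exact ⟨b, by simp [hb, Ne.symm hne], by rw [← hjk, hja, hab]⟩
    · exact ⟨j, by simp [hj, hja], hjk⟩
  have h1 := (Finset.card_le_card hsub).trans Finset.card_image_le
  rw [Finset.card_erase_of_mem (a := a) (by simp [ha])] at h1
  simp at h1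

theorem door_rot {l : (Fin 6 → ℤ) → Fin 6} {p : Cell} (h : Door l p.1) (j : Fin 6) (hj : j ≠ 0)
    (hlab : lab l (p.1 j) = lab l (p.1 0)) : Door l (rot6 j p).1 := by
  intro k hk
  obtain ⟨i, hi, hik⟩ := h k hk
  by_cases hij : i = j
  · refine ⟨-j, by simpa using hj, ?_⟩
    simp only [rot6, neg_add_cancel]
    rw [← hlab, ← hij, hik]
  · refine ⟨i - j, sub_ne_zero.2 hij, ?_⟩
    simp only [rot6, sub_add_cancel]
    exact hik

def baseCell (N : ℤ) : Cell :=
  (![![0, 1, 0, 0, 0, N - 1], ![-1, 1, 0, 0, 0, N], ![-1, 1, 0, 0, 1, N - 1],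
    ![-1, 1, 0, 1, 0, N - 1], ![-1, 1, 1, 0, 0, N - 1], ![-1, 2, 0, 0, 0, N - 1]],
    Equiv.subLeft 5)

theorem base_simp (N : ℤ) (hN : 1 ≤ N) : Simp6 N (baseCell N).1 (baseCell N).2 := by
  refine ⟨?_, ?_, ?_⟩
  · intro j
    funext i
    fin_cases j <;> fin_cases i <;> simp [baseCell, dv] <;> first | decide | ring
  · intro j i
    fin_cases j <;> fin_cases i <;> simp [baseCell] <;> omega
  · intro j
    fin_cases j <;> simp [baseCell, Fin.sum_univ_six]

theorem base_door (N : ℤ) (l : (Fin 6 → ℤ) → Fin 6) : Door l (baseCell N).1 := by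
  intro k hk
  refine ⟨-k, by simpa using hk, ?_⟩
  have hout : lab l ((baseCell N).1 (-k)) = outer ((baseCell N).1 (-k)) := by
    unfold lab
    rw [if_neg]
    intro h
    have := h 0
    revert this
    fin_cases k <;> simp at hk <;> simp [baseCell, show (-1 : Fin 6) = 5 from rfl,
      show (-2 : Fin 6) = 4 from rfl, show (-3 : Fin 6) = 3 from rfl,
      show (-4 : Fin 6) = 2 from rfl, show (-5 : Fin 6) = 1 from rfl]
  rw [hout]
  fin_cases k <;> simp at hk <;> simp [outer, baseCell, show (-1 : Fin 6) = 5 from rfl,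
      show (-2 : Fin 6) = 4 from rfl, show (-3 : Fin 6) = 3 from rfl,
      show (-4 : Fin 6) = 2 from rfl, show (-5 : Fin 6) = 1 from rfl]

theorem base_bdry (N : ℤ) : ¬ ∀ i, -1 ≤ ((baseCell N).1 5 + dv ((baseCell N).2 0)) i := by
  intro h
  have := h 0
  simp [baseCell, dv] at this

theorem bdry_unique (N : ℤ) (hN : 1 ≤ N) (l : (Fin 6 → ℤ) → Fin 6)
    (hl : ∀ x : Fin 6 → ℤ, (∀ i, 0 ≤ x i) → ∑ i, x i = N → 0 < x (l x))
    (p : Cell) (h : Simp6 N p.1 p.2) (hd : Door l p.1)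
    (hb : ¬ ∀ i, -1 ≤ (p.1 5 + dv (p.2 0)) i) : p = baseCell N := by
  obtain ⟨v, π⟩ := p
  simp only at h hd hb
  push Not at hb
  obtain ⟨i, hi⟩ := hb
  have hst := h.1
  have h0 := hst 0
  have h1 := hst 1
  have h2 := hst 2
  have h3 := hst 3
  have h4 := hst 4
  have h5 := hst 5
  simp only [Fin.isValue, show (0 : Fin 6) + 1 = 1 from rfl, show (1 : Fin 6) + 1 = 2 from rfl,
    show (2 : Fin 6) + 1 = 3 from rfl, show (3 : Fin 6) + 1 = 4 from rfl,
    show (4 : Fin 6) + 1 = 5 from rfl, show (5 : Fin 6) + 1 = 0 from rfl] at h0 h1 h2 h3 h4 h5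
  have hv5 := h.2.1 5 i
  have hv1 := h.2.1 1 i
  have c0 := congrFun h0 i
  have c5 := congrFun h5 i
  simp only [Pi.add_apply] at hi c0 c5
  have k0 : i = π 0 + 1 := by
    by_contra hne
    have : 0 ≤ dv (π 0) i := by unfold dv; rw [if_neg hne]; split_ifs <;> simp
    omega
  have hdge : ∀ k, -1 ≤ dv k i := by intro k; unfold dv; split_ifs <;> simp
  have k5 : i = π 5 := by
    by_contra hne
    have h1 : dv (π 5) i ≤ 0 := by unfold dv; rw [if_neg hne]; split_ifs <;> simp
    omega
  have s0 : π.symm i = 5 := by rw [Equiv.symm_apply_eq]; exact k5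
  have s1 : π.symm (i - 1) = 0 := by rw [Equiv.symm_apply_eq, k0]; simp
  have hdv0 := hdge (π 0)
  have v5i : v 5 i = -1 := by omega
  have hconst : ∀ j, j ≠ 0 → v j i = -1 := by
    have g1 := simp_step h i 1
    have g2 := simp_step h i 2
    have g3 := simp_step h i 3
    have g4 := simp_step h i 4
    rw [s0, s1] at g1 g2 g3 g4
    simp at g1 g2 g3 g4
    intro j hj
    fin_cases j <;> simp at hj ⊢ <;> omega
  have i0 : i = 0 := by
    by_contra hne
    obtain ⟨j, hj, hjk⟩ := hd i hne
    have := lab_pos l N hN hl (v j) (h.2.2 j)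
    rw [hjk, hconst j hj] at this
    omega
  subst i0
  have p5 : π 5 = 0 := k5.symm
  have p0 : π 0 = 5 := by
    revert k0; generalize π 0 = a; revert a; decide
  have hout : ∀ j, j ≠ 0 → lab l (v j) = outer (v j) := by
    intro j hj
    unfold lab
    rw [if_neg]
    intro h
    have := h 0
    rw [hconst j hj] at this
    omega
  have pne : ∀ j, j ≠ 0 → π j ≠ 5 := by
    intro j hj h
    exact hj (π.injective (h.trans p0.symm))
  have m1 := outer_mono (v 1) _ (pne 1 (by decide))
  have m2 := outer_mono (v 2) _ (pne 2 (by decide))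
  have m3 := outer_mono (v 3) _ (pne 3 (by decide))
  have m4 := outer_mono (v 4) _ (pne 4 (by decide))
  rw [← h1] at m1
  rw [← h2] at m2
  rw [← h3] at m3
  rw [← h4] at m4
  obtain ⟨a1, a2, a3, a4, a5⟩ := antitone_labels _ _ _ _ _ m1 m2 m3 m4 (by
    intro k hk
    obtain ⟨j, hj, hjk⟩ := hd k hk
    rw [hout j hj] at hjk
    fin_cases j <;> simp at hj hjk <;> simp [hjk])
  have p1 : π 1 = 4 := outer_drop (v 1) (π 1) 4 (pne 1 (by decide)) a1 (h1 ▸ a2) (by decide)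
  have p2 : π 2 = 3 := outer_drop (v 2) (π 2) 3 (pne 2 (by decide)) a2 (h2 ▸ a3) (by decide)
  have p3 : π 3 = 2 := outer_drop (v 3) (π 3) 2 (pne 3 (by decide)) a3 (h3 ▸ a4) (by decide)
  have p4 : π 4 = 1 := outer_drop (v 4) (π 4) 1 (pne 4 (by decide)) a4 (h4 ▸ a5) (by decide)
  have hπ : π = Equiv.subLeft 5 := by
    ext j
    fin_cases j <;> simp [p0, p1, p2, p3, p4, p5]
  have q4 := outer_eq _ _ (by decide) a2
  have q3 := outer_eq _ _ (by decide) a3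
  have q2 := outer_eq _ _ (by decide) a4
  have q1 := outer_eq _ _ (by decide) a5
  have r4 := outer_gt (v 1) 4 (by rw [a1]; decide)
  have r3 := outer_gt (v 1) 3 (by rw [a1]; decide)
  have r2 := outer_gt (v 1) 2 (by rw [a1]; decide)
  have r1 := outer_gt (v 1) 1 (by rw [a1]; decide)
  have hs := h.2.2 1
  have z := hconst 1 (by decide)
  rw [p1] at h1
  rw [p2] at h2
  rw [p3] at h3
  rw [p4] at h4
  rw [p5] at h5
  rw [h4, h3, h2, h1] at q1
  rw [h3, h2, h1] at q2
  rw [h2, h1] at q3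
  rw [h1] at q4
  simp [psum, Fin.sum_univ_six, dv] at q1 q2 q3 q4 r1 r2 r3 r4 hs
  have w1 : v 1 = ![-1, 1, 0, 0, 0, N] := by
    funext i
    fin_cases i <;> simp <;> omega
  have w2 : v 2 = ![-1, 1, 0, 0, 1, N - 1] := by
    rw [h1, w1]; funext i; fin_cases i <;> simp [dv]; ring
  have w3 : v 3 = ![-1, 1, 0, 1, 0, N - 1] := by
    rw [h2, w2]; funext i; fin_cases i <;> simp [dv]
  have w4 : v 4 = ![-1, 1, 1, 0, 0, N - 1] := by
    rw [h3, w3]; funext i; fin_cases i <;> simp [dv]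
  have w5 : v 5 = ![-1, 2, 0, 0, 0, N - 1] := by
    rw [h4, w4]; funext i; fin_cases i <;> simp [dv]
  have w0 : v 0 = ![0, 1, 0, 0, 0, N - 1] := by
    rw [h5, w5]; funext i; fin_cases i <;> simp [dv]
  refine Prod.ext ?_ hπ
  funext j
  fin_cases j <;> simp [baseCell, w0, w1, w2, w3, w4, w5]

theorem sperner6 (N : ℤ) (hN : 1 ≤ N) (l : (Fin 6 → ℤ) → Fin 6)
    (hl : ∀ x : Fin 6 → ℤ, (∀ i, 0 ≤ x i) → ∑ i, x i = N → 0 < x (l x)) :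
    ∃ v : Fin 6 → Fin 6 → ℤ, (∀ j i, 0 ≤ v j i) ∧ (∀ j, ∑ i, v j i = N) ∧
      (∀ i j k, v j i ≤ v k i + 1) ∧ ∀ k, ∃ j, l (v j) = k := by
  classical
  have hfull : ∃ p : Cell, Simp6 N p.1 p.2 ∧ Door l p.1 ∧ lab l (p.1 0) = 0 := by
    by_contra hno
    push Not at hno
    have hfin : {p : Cell | Simp6 N p.1 p.2 ∧ Door l p.1}.Finite := by
      refine Set.Finite.subset ((Set.finite_Icc (fun _ _ => (-1 : ℤ) : Fin 6 → Fin 6 → ℤ)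
        (fun _ _ => N + 5)).prod (Set.finite_univ (α := Equiv.Perm (Fin 6)))) ?_
      rintro ⟨v, π⟩ ⟨h, -⟩
      refine ⟨⟨fun j i => h.2.1 j i, fun j i => ?_⟩, trivial⟩
      have hs := h.2.2 j
      have hg := h.2.1 j
      simp only at hs hg ⊢
      rw [Fin.sum_univ_six] at hs
      have g0 := hg 0
      have g1 := hg 1
      have g2 := hg 2
      have g3 := hg 3
      have g4 := hg 4
      have g5 := hg 5
      fin_cases i <;> simp <;> omega
    have htwin : ∀ p : Cell, Simp6 N p.1 p.2 ∧ Door l p.1 →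
        ∃ j, j ≠ 0 ∧ lab l (p.1 j) = lab l (p.1 0) := by
      rintro p ⟨h1, h2⟩
      exact h2 _ (hno p h1 h2)
    choose! tw htw0 htw using htwin
    have hgmem : ∀ p : Cell, Simp6 N p.1 p.2 ∧ Door l p.1 →
        Simp6 N (rot6 (tw p) p).1 (rot6 (tw p) p).2 ∧ Door l (rot6 (tw p) p).1 :=
      fun p hp => ⟨simp_rot hp.1 _, door_rot hp.2 _ (htw0 p hp) (htw p hp)⟩
    refine parity_contra hfin.toFinset
      (fun p => if ∀ i, -1 ≤ (p.1 5 + dv (p.2 0)) i then flip6 p else p)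
      (fun p => rot6 (tw p) p) ?_ ?_ ?_ ?_ ?_ (baseCell N) ?_ ?_ ?_
    · intro p hp
      simp only [Set.Finite.mem_toFinset, Set.mem_ofPred_eq] at hp ⊢
      split_ifs with hb
      · exact ⟨simp_flip hp.1 hb, door_flip hp.2⟩
      · exact hp
    · intro p hp
      simp only [Set.Finite.mem_toFinset, Set.mem_ofPred_eq] at hp
      by_cases hb : ∀ i, -1 ≤ (p.1 5 + dv (p.2 0)) i
      · simp only [if_pos hb]
        rw [if_pos (flip_back hp.1), flip_flip6 hp.1]
      · simp only [if_neg hb]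
    · intro p hp
      simp only [Set.Finite.mem_toFinset, Set.mem_ofPred_eq] at hp ⊢
      exact hgmem p hp
    · intro p hp
      simp only [Set.Finite.mem_toFinset, Set.mem_ofPred_eq] at hp
      have hp' := hgmem p hp
      have e0 := htw0 _ hp'
      have e := htw _ hp'
      rw [rot_rot]
      suffices hz : tw (rot6 (tw p) p) + tw p = 0 by
        simp only [hz]; exact rot_zero p
      by_contra hz
      simp only [rot6, zero_add] at e
      have := door_inj hp.2 _ _ hz (htw0 p hp) e
      exact e0 (by simpa using this)
    · intro p hp
      simp only [Set.Finite.mem_toFinset, Set.mem_ofPred_eq] at hp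
      exact rot_ne _ _ (htw0 p hp)
    · simp only [Set.Finite.mem_toFinset, Set.mem_ofPred_eq]
      exact ⟨base_simp N hN, base_door N l⟩
    · exact if_neg (base_bdry N)
    · intro p hp hfp
      simp only [Set.Finite.mem_toFinset, Set.mem_ofPred_eq] at hp
      by_cases hb : ∀ i, -1 ≤ (p.1 5 + dv (p.2 0)) i
      · simp only [if_pos hb] at hfp
        exact absurd hfp (flip_ne p)
      · exact bdry_unique N hN l hl p hp.1 hp.2 hb
  obtain ⟨p, h, hd, h0⟩ := hfull
  have hall : ∀ k, ∃ j, lab l (p.1 j) = k := by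
    intro k
    by_cases hk : k = 0
    · exact ⟨0, by rw [h0, hk]⟩
    · obtain ⟨j, -, hj⟩ := hd k hk
      exact ⟨j, hj⟩
  have hnn : ∀ j i, 0 ≤ p.1 j i := by
    intro j i
    obtain ⟨k, hk⟩ := hall i
    have := lab_pos l N hN hl (p.1 k) (h.2.2 k)
    rw [hk] at this
    have := simp_var h i k j
    omega
  refine ⟨p.1, hnn, h.2.2, fun i j k => simp_var h i j k, fun k => ?_⟩
  obtain ⟨j, hj⟩ := hall k
  refine ⟨j, ?_⟩
  unfold lab at hj
  rwa [if_pos (hnn j)] at hj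

theorem kkm6 (U : Fin 6 → Set (Fin 6 → ℝ)) (hU : ∀ i, IsOpen (U i))
    (hcov : stdSimplex ℝ (Fin 6) ⊆ ⋃ i, U i)
    (hface : ∀ i, ∀ x ∈ stdSimplex ℝ (Fin 6), x ∈ U i → 0 < x i) :
    ∃ x ∈ stdSimplex ℝ (Fin 6), ∀ i, x ∈ U i := by
  obtain ⟨δ, hδ, hleb⟩ := lebesgue_number_lemma_of_metric (isCompact_stdSimplex ℝ (Fin 6)) hU hcov
  choose! c hc using hleb
  obtain ⟨n, hn⟩ := exists_nat_one_div_lt hδ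
  have hNpos : (0 : ℝ) < (n : ℝ) + 1 := by positivity
  let sc : (Fin 6 → ℤ) → (Fin 6 → ℝ) := fun z i => (z i : ℝ) / ((n : ℝ) + 1)
  have hsc : ∀ z : Fin 6 → ℤ, (∀ i, 0 ≤ z i) → ∑ i, z i = (n : ℤ) + 1 →
      sc z ∈ stdSimplex ℝ (Fin 6) := by
    intro z hz hs
    refine ⟨fun i => div_nonneg (by exact_mod_cast hz i) hNpos.le, ?_⟩
    simp only [sc]
    rw [← Finset.sum_div, div_eq_one_iff_eq hNpos.ne']
    exact_mod_cast hs
  obtain ⟨v, hv0, hvs, hvar, hlab⟩ := sperner6 ((n : ℤ) + 1) (by omega) (fun z => c (sc z)) (by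
    intro z hz hs
    have h1 := hsc z hz hs
    have h2 := hface _ _ h1 (hc _ h1 (Metric.mem_ball_self hδ))
    simp only [sc] at h2 ⊢
    have := (div_pos_iff_of_pos_right hNpos).1 h2
    exact_mod_cast this)
  refine ⟨sc (v 0), hsc _ (hv0 0) (hvs 0), fun i => ?_⟩
  obtain ⟨j, hj⟩ := hlab i
  have h1 := hsc _ (hv0 j) (hvs j)
  have h2 := hc _ h1
  rw [hj] at h2
  apply h2
  rw [Metric.mem_ball]
  refine lt_of_le_of_lt ?_ hn
  rw [dist_pi_le_iff (by positivity)]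
  intro k
  simp only [sc, Real.dist_eq]
  rw [← sub_div, abs_div, abs_of_pos hNpos]
  gcongr
  have e1 := hvar k 0 j
  have e2 := hvar k j 0
  rw [abs_le]
  constructor
  · have : (v j k : ℝ) ≤ v 0 k + 1 := by exact_mod_cast e2
    linarith
  · have : (v 0 k : ℝ) ≤ v j k + 1 := by exact_mod_cast e1
    linarith

/-- angles of the six points on the circle -/
def th (x : Fin 6 → ℝ) (k : ℕ) : ℝ := 2 * Real.pi * ∑ l ∈ Finset.range k, x (Fin.ofNat 6 l)

/-- midpoint angles -/
def mid (x : Fin 6 → ℝ) (k : ℕ) : ℝ := (th x k + th x (k + 3)) / 2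

/-- the affine function vanishing on the k-th chord -/
def gf (R : ℝ) (x : Fin 6 → ℝ) (k : ℕ) (z : Plane) : ℝ :=
  R * Real.cos ((th x (k + 3) - th x k) / 2)
    - (z 0 * Real.cos (mid x k) + z 1 * Real.sin (mid x k))

theorem th_mono {x : Fin 6 → ℝ} (hx : x ∈ stdSimplex ℝ (Fin 6)) : Monotone (th x) := by
  refine monotone_nat_of_le_succ fun k => ?_
  unfold th
  rw [Finset.sum_range_succ, mul_add]
  have := mul_nonneg (mul_nonneg (by norm_num : (0:ℝ) ≤ 2) Real.pi_pos.le) (hx.1 (Fin.ofNat 6 k))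
  linarith

theorem th_add_six {x : Fin 6 → ℝ} (hx : x ∈ stdSimplex ℝ (Fin 6)) (k : ℕ) (hk : k ≤ 5) :
    th x (k + 6) = th x k + 2 * Real.pi := by
  have hs := hx.2
  rw [Fin.sum_univ_six] at hs
  have : ∑ l ∈ Finset.range (k + 6), x (Fin.ofNat 6 l) =
      ∑ l ∈ Finset.range k, x (Fin.ofNat 6 l) + 1 := by
    rw [← hs]
    interval_cases k <;> simp [Finset.sum_range_succ, Fin.ofNat] <;> ring
  unfold th
  rw [this]
  ring

theorem gf_add_three (R : ℝ) {x : Fin 6 → ℝ} (hx : x ∈ stdSimplex ℝ (Fin 6)) (k : ℕ) (hk : k ≤ 5)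
    (z : Plane) : gf R x (k + 3) z = - gf R x k z := by
  unfold gf mid
  rw [show k + 3 + 3 = k + 6 from rfl, th_add_six hx k hk]
  rw [show (th x k + 2 * Real.pi - th x (k + 3)) / 2 =
    Real.pi - (th x (k + 3) - th x k) / 2 by ring,
    show (th x (k + 3) + (th x k + 2 * Real.pi)) / 2 =
    (th x k + th x (k + 3)) / 2 + Real.pi by ring, Real.cos_pi_sub, Real.cos_add_pi,
    Real.sin_add_pi]
  ring

theorem trig_face (a b D t : ℝ) (ha : 0 ≤ a) (hab : a ≤ b) (hb : b ≤ Real.pi) (hD : 0 < D)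
    (h1 : Real.cos a * D - Real.sin a * t < 0) (h2 : 0 < Real.cos b * D - Real.sin b * t) :
    False := by
  have sa := Real.sin_nonneg_of_nonneg_of_le_pi ha (hab.trans hb)
  have sb := Real.sin_nonneg_of_nonneg_of_le_pi (ha.trans hab) hb
  have e1 := mul_nonneg sb (neg_nonneg.2 h1.le)
  have e2 := mul_nonneg sa h2.le
  have e3 : D * Real.sin (b - a) ≤ 0 := by
    rw [Real.sin_sub]; nlinarith
  rcases eq_or_lt_of_le hab with h | h
  · subst h; linarith
  rcases eq_or_lt_of_le (show b - a ≤ Real.pi by linarith) with h' | h'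
  · have : a = 0 := by linarith
    subst this
    simp at h1
    linarith
  · have := mul_pos hD (Real.sin_pos_of_pos_of_lt_pi (by linarith : 0 < b - a) h')
    linarith

theorem gf_rot (R : ℝ) (x : Fin 6 → ℝ) (k : ℕ) (φ a : ℝ) (z : Plane) (h1 : th x k = φ)
    (h2 : (th x (k + 3) - th x k) / 2 = a) :
    gf R x k z = Real.cos a * (R - (z 0 * Real.cos φ + z 1 * Real.sin φ))
      - Real.sin a * (-z 0 * Real.sin φ + z 1 * Real.cos φ) := by
  have : mid x k = φ + a := by unfold mid; rw [← h1, ← h2]; ring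
  unfold gf
  rw [this, h2, Real.cos_add, Real.sin_add]
  ring

theorem gf_face (R : ℝ) (hR : 0 < R) {x : Fin 6 → ℝ} (hx : x ∈ stdSimplex ℝ (Fin 6)) (i : Fin 6)
    (hi : x i = 0) (z : Plane) (hz : z 0 ^ 2 + z 1 ^ 2 < R ^ 2)
    (h1 : gf R x i z < 0) (h2 : 0 < gf R x (i + 1 : ℕ) z) : False := by
  have hth : th x ((i : ℕ) + 1) = th x i := by
    unfold th
    rw [Finset.sum_range_succ]
    have : Fin.ofNat 6 (i : ℕ) = i := by ext; simp [Fin.ofNat]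
    rw [this, hi, add_zero]
  have m1 := th_mono hx (show (i : ℕ) ≤ i + 3 by omega)
  have m2 := th_mono hx (show (i : ℕ) + 3 ≤ i + 1 + 3 by omega)
  have m3 := th_mono hx (show (i : ℕ) + 1 + 3 ≤ i + 6 by omega)
  rw [th_add_six hx i (by omega)] at m3
  rw [gf_rot R x i (th x i) _ z rfl rfl] at h1
  rw [gf_rot R x (i + 1) (th x i) _ z hth rfl] at h2
  refine trig_face _ _ _ _ ?_ ?_ ?_ ?_ h1 h2
  · linarith
  · rw [hth]; linarith
  · rw [hth]; linarith
  · have := Real.sin_sq_add_cos_sq (th x i)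
    have h3 : (z 0 * Real.cos (th x i) + z 1 * Real.sin (th x i)) ^ 2 < R ^ 2 := by
      nlinarith [sq_nonneg (z 0 * Real.sin (th x i) - z 1 * Real.cos (th x i))]
    have := abs_lt_of_sq_lt_sq h3 hR.le
    linarith [(abs_lt.1 (abs_lt_of_sq_lt_sq h3 hR.le)).2]

theorem gf_cont (R : ℝ) (k : ℕ) : Continuous (fun p : (Fin 6 → ℝ) × Plane => gf R p.1 k p.2) := by
  unfold gf mid th
  fun_prop

theorem U_open (R : ℝ) (A : Set Plane) (hA : IsCompact A) (a b : ℕ) :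
    IsOpen {x : Fin 6 → ℝ | ∀ z ∈ A, gf R x a z < 0 ∧ 0 < gf R x b z} := by
  rw [isOpen_iff_eventually]
  intro x hx
  simp only [Set.mem_ofPred_eq] at hx ⊢
  refine hA.eventually_forall_of_forall_eventually
    (P := fun x z => gf R x a z < 0 ∧ 0 < gf R x b z) fun z hz => ?_
  have c1 : ContinuousAt (fun p : (Fin 6 → ℝ) × Plane => gf R p.1 a p.2) (x, z) :=
    (gf_cont R a).continuousAt
  have c2 : ContinuousAt (fun p : (Fin 6 → ℝ) × Plane => gf R p.1 b p.2) (x, z) :=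
    (gf_cont R b).continuousAt
  have d1 := c1.tendsto.eventually (Iio_mem_nhds (hx z hz).1)
  have d2 := c2.tendsto.eventually (Ioi_mem_nhds (hx z hz).2)
  filter_upwards [d1, d2] with p h1 h2
  exact ⟨h1, h2⟩

theorem gf_line (R : ℝ) (x : Fin 6 → ℝ) (k : ℕ) :
    ∃ L : AffineSubspace ℝ Plane, IsLine L ∧ ∀ z, gf R x k z = 0 → z ∈ L := by
  set m := mid x k with hm
  set r := R * Real.cos ((th x (k + 3) - th x k) / 2) with hr
  have hsc := Real.sin_sq_add_cos_sq m
  let d : Plane := !₂[-Real.sin m, Real.cos m]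
  have hd : d ≠ 0 := by
    intro h
    have h0 := congrArg (fun w : Plane => w 0) h
    have h1 := congrArg (fun w : Plane => w 1) h
    simp [d] at h0 h1
    rw [h0, h1] at hsc
    norm_num at hsc
  refine ⟨AffineSubspace.mk' (!₂[r * Real.cos m, r * Real.sin m] : Plane)
    (Submodule.span ℝ {d}), ?_, ?_⟩
  · unfold IsLine
    rw [AffineSubspace.direction_mk', finrank_span_singleton hd]
  · intro z hz
    rw [AffineSubspace.mem_mk', Submodule.mem_span_singleton]
    refine ⟨-z 0 * Real.sin m + z 1 * Real.cos m, ?_⟩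
    unfold gf at hz
    rw [← hm, ← hr] at hz
    have hr' : r = z 0 * Real.cos m + z 1 * Real.sin m := by linarith
    rw [hr']
    ext i
    fin_cases i
    · simp [d]; linear_combination z 0 * hsc
    · simp [d]; linear_combination z 1 * hsc

def AffLike (h : Plane → ℝ) : Prop :=
  ∃ β : Plane → ℝ, ∀ z d : Plane, ∀ t : ℝ, h (z + t • d) = h z + t * β d

theorem gf_aff (R : ℝ) (x : Fin 6 → ℝ) (k : ℕ) : AffLike (gf R x k) := by
  refine ⟨fun d => -(d 0 * Real.cos (mid x k) + d 1 * Real.sin (mid x k)), fun z d t => ?_⟩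
  unfold gf
  simp
  ring

theorem AffLike.neg {h : Plane → ℝ} (hh : AffLike h) : AffLike (fun z => - h z) := by
  obtain ⟨β, hβ⟩ := hh
  exact ⟨fun d => - β d, fun z d t => by simp only [hβ]; ring⟩

theorem seg_pos (α β s t u : ℝ) (h1 : 0 < α + s * β) (h2 : 0 < α + t * β)
    (h : (s ≤ u ∧ u ≤ t) ∨ (t ≤ u ∧ u ≤ s)) : 0 < α + u * β := by
  rcases le_total 0 β with hb | hb <;> rcases h with ⟨h3, h4⟩ | ⟨h3, h4⟩
  · nlinarith
  · nlinarith
  · nlinarith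
  · nlinarith

theorem tri_pos (h0 h1 h2 : Plane → ℝ) (a0 : AffLike h0) (a1 : AffLike h1) (a2 : AffLike h2)
    (A B C : Set Plane) (hA : ∀ z ∈ A, 0 < h0 z ∧ 0 < h1 z) (hB : ∀ z ∈ B, 0 < h0 z ∧ 0 < h2 z)
    (hC : ∀ z ∈ C, 0 < h1 z ∧ 0 < h2 z)
    (hL : ∃ L : AffineSubspace ℝ Plane, TransversalLine L {A, B, C}) :
    ∃ z, 0 < h0 z ∧ 0 < h1 z ∧ 0 < h2 z := by
  obtain ⟨L, hline, hmeet⟩ := hL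
  obtain ⟨p, hpL, hpA⟩ := hmeet A (by simp)
  obtain ⟨q, hqL, hqB⟩ := hmeet B (by simp)
  obtain ⟨r, hrL, hrC⟩ := hmeet C (by simp)
  obtain ⟨d, -, hd⟩ := finrank_eq_one_iff'.1 hline
  obtain ⟨s, hs⟩ := hd ⟨q -ᵥ p, AffineSubspace.vsub_mem_direction hqL hpL⟩
  obtain ⟨t, ht⟩ := hd ⟨r -ᵥ p, AffineSubspace.vsub_mem_direction hrL hpL⟩
  have hq : q = p + s • (d : Plane) := by
    have := congrArg Subtype.val hs
    simp at this
    rw [this]; abel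
  have hr : r = p + t • (d : Plane) := by
    have := congrArg Subtype.val ht
    simp at this
    rw [this]; abel
  obtain ⟨β0, b0⟩ := a0
  obtain ⟨β1, b1⟩ := a1
  obtain ⟨β2, b2⟩ := a2
  obtain ⟨A0, A1⟩ := hA p hpA
  obtain ⟨B0, B2⟩ := hB q hqB
  obtain ⟨C1, C2⟩ := hC r hrC
  have hcase : ((s ≤ 0 ∧ 0 ≤ t) ∨ (t ≤ 0 ∧ 0 ≤ s)) ∨ ((0 ≤ s ∧ s ≤ t) ∨ (t ≤ s ∧ s ≤ 0)) ∨
      ((0 ≤ t ∧ t ≤ s) ∨ (s ≤ t ∧ t ≤ 0)) := by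
    rcases le_total s 0 with h | h <;> rcases le_total t 0 with h' | h' <;>
      rcases le_total s t with h'' | h'' <;> simp [h, h', h'']
  rcases hcase with h | h | h
  · refine ⟨p, A0, A1, ?_⟩
    rw [hq, b2] at B2
    rw [hr, b2] at C2
    have := seg_pos _ _ s t 0 B2 C2 h
    simpa using this
  · refine ⟨q, B0, ?_, B2⟩
    rw [hr, b1] at C1
    rw [hq, b1]
    exact seg_pos _ _ 0 t s (by simpa using A1) C1 h
  · refine ⟨r, ?_, C1, C2⟩
    rw [hq, b0] at B0
    rw [hr, b0]
    exact seg_pos _ _ 0 s t (by simpa using A0) B0 h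

theorem no_both (R : ℝ) {x : Fin 6 → ℝ} (hx : x ∈ stdSimplex ℝ (Fin 6)) (p q : Plane)
    (p0 : gf R x 0 p < 0) (p1 : 0 < gf R x 1 p) (p2 : gf R x 2 p < 0)
    (q0 : 0 < gf R x 0 q) (q1 : gf R x 1 q < 0) (q2 : 0 < gf R x 2 q) : False := by
  have t1 := th_mono hx (show 0 ≤ 1 by omega)
  have t2 := th_mono hx (show 1 ≤ 2 by omega)
  have t3 := th_mono hx (show 2 ≤ 3 by omega)
  have t4 := th_mono hx (show 3 ≤ 4 by omega)
  have t5 := th_mono hx (show 4 ≤ 5 by omega)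
  have t6 := th_mono hx (show 5 ≤ 0 + 6 by omega)
  rw [th_add_six hx 0 (by omega)] at t6
  have m01 : mid x 0 ≤ mid x 1 := by unfold mid; norm_num; linarith
  have m12 : mid x 1 ≤ mid x 2 := by unfold mid; norm_num; linarith
  have m20 : mid x 2 ≤ mid x 0 + Real.pi := by unfold mid; norm_num; linarith
  unfold gf at *
  rcases eq_or_lt_of_le m01 with h | h
  · rw [h] at p0 q0; linarith
  rcases eq_or_lt_of_le m12 with h' | h'
  · rw [h'] at p1 q1; linarith
  have s0 := Real.sin_nonneg_of_nonneg_of_le_pi (show 0 ≤ mid x 2 - mid x 1 by linarith)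
    (by linarith)
  have s1 := Real.sin_nonneg_of_nonneg_of_le_pi (show 0 ≤ mid x 2 - mid x 0 by linarith)
    (by linarith)
  have s2 := Real.sin_pos_of_pos_of_lt_pi (show 0 < mid x 1 - mid x 0 by linarith)
    (by linarith)
  have e0 := mul_nonneg s0 (sub_nonneg.2 (p0.trans q0).le)
  have e1 := mul_nonneg s1 (sub_nonneg.2 (q1.trans p1).le)
  have e2 := mul_pos s2 (sub_pos.2 (p2.trans q2))
  rw [Real.sin_sub] at e0 e1 e2
  nlinarith

theorem sign_const (R : ℝ) (x : Fin 6 → ℝ) (k : ℕ) (A : Set Plane) (hA : Convex ℝ A)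
    (h : ∀ z ∈ A, gf R x k z ≠ 0) : (∀ z ∈ A, gf R x k z < 0) ∨ (∀ z ∈ A, 0 < gf R x k z) := by
  by_contra hcon
  push Not at hcon
  obtain ⟨⟨a, ha, ha'⟩, b, hb, hb'⟩ := hcon
  have hc : Continuous (gf R x k) := by
    unfold gf
    fun_prop
  obtain ⟨z, hz, hz0⟩ := hA.isPreconnected.intermediate_value hb ha hc.continuousOn ⟨hb', ha'⟩
  exact h z hz hz0

/-- Eckhoff: if every three members of a planar family of convex bodies have a
common transversal line, then four lines suffice to meet every member. -/
theorem eckhoff_four_lines (G : Set (Set Plane)) (hfin : G.Finite)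
    (hbody : ∀ A ∈ G, ConvexBody2 A)
    (htrans : ∀ A ∈ G, ∀ B ∈ G, ∀ C ∈ G,
      ∃ L : AffineSubspace ℝ Plane, TransversalLine L {A, B, C}) :
    ∃ L₁ L₂ L₃ L₄ : AffineSubspace ℝ Plane,
      IsLine L₁ ∧ IsLine L₂ ∧ IsLine L₃ ∧ IsLine L₄ ∧
      ∀ A ∈ G, ((L₁ : Set Plane) ∩ A).Nonempty ∨ ((L₂ : Set Plane) ∩ A).Nonempty ∨
        ((L₃ : Set Plane) ∩ A).Nonempty ∨ ((L₄ : Set Plane) ∩ A).Nonempty := by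
  have hR : ∃ R : ℝ, 0 < R ∧ ∀ A ∈ G, ∀ z ∈ A, z 0 ^ 2 + z 1 ^ 2 < R ^ 2 := by
    have hb : Bornology.IsBounded (⋃ A ∈ G, A) := by
      rw [Bornology.isBounded_biUnion hfin]
      exact fun A hA => (hbody A hA).2.1.isBounded
    obtain ⟨R, hR0, hR⟩ := hb.subset_ball_lt 0 0
    refine ⟨R, hR0, fun A hA z hz => ?_⟩
    have h1 : z ∈ Metric.ball (0 : Plane) R := hR (Set.mem_biUnion hA hz)
    rw [mem_ball_zero_iff] at h1
    have h2 := EuclideanSpace.norm_sq_eq z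
    simp [Fin.sum_univ_two] at h2
    rw [← h2]
    exact pow_lt_pow_left₀ h1 (norm_nonneg z) (by norm_num)
  obtain ⟨R, hR0, hR⟩ := hR
  let U : Fin 6 → Set (Fin 6 → ℝ) := fun i =>
    ⋃ A ∈ G, {x | ∀ z ∈ A, gf R x i z < 0 ∧ 0 < gf R x ((i : ℕ) + 1) z}
  have hUmem : ∀ i x, x ∈ U i ↔ ∃ A ∈ G, ∀ z ∈ A, gf R x i z < 0 ∧ 0 < gf R x ((i : ℕ) + 1) z := by
    intro i x
    simp [U]
  by_cases hcov : stdSimplex ℝ (Fin 6) ⊆ ⋃ i, U i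
  · exfalso
    obtain ⟨x, hx, hxU⟩ := kkm6 U
      (fun i => isOpen_biUnion fun A hA => U_open R A (hbody A hA).2.1 _ _) hcov (by
        intro i x hx hxi
        obtain ⟨A, hA, hAz⟩ := (hUmem i x).1 hxi
        obtain ⟨z, hz⟩ := (hbody A hA).1
        by_contra hneg
        have hx0 : x i = 0 := le_antisymm (not_lt.1 hneg) (hx.1 i)
        exact gf_face R hR0 hx i hx0 z (hR A hA z hz) (hAz z hz).1 (hAz z hz).2)
    obtain ⟨A0, hA0, H0⟩ := (hUmem 0 x).1 (hxU 0)
    obtain ⟨A1, hA1, H1⟩ := (hUmem 1 x).1 (hxU 1)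
    obtain ⟨A2, hA2, H2⟩ := (hUmem 2 x).1 (hxU 2)
    obtain ⟨A3, hA3, H3⟩ := (hUmem 3 x).1 (hxU 3)
    obtain ⟨A4, hA4, H4⟩ := (hUmem 4 x).1 (hxU 4)
    obtain ⟨A5, hA5, H5⟩ := (hUmem 5 x).1 (hxU 5)
    have g3 : ∀ z, gf R x 3 z = - gf R x 0 z := gf_add_three R hx 0 (by omega)
    have g4 : ∀ z, gf R x 4 z = - gf R x 1 z := gf_add_three R hx 1 (by omega)
    have g5 : ∀ z, gf R x 5 z = - gf R x 2 z := gf_add_three R hx 2 (by omega)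
    have g6 : ∀ z, gf R x 6 z = gf R x 0 z := fun z => by
      rw [show gf R x 6 z = - gf R x 3 z from gf_add_three R hx 3 (by omega) z, g3, neg_neg]
    have e0 : ((0 : Fin 6) : ℕ) = 0 := rfl
    have e1 : ((1 : Fin 6) : ℕ) = 1 := rfl
    have e2 : ((2 : Fin 6) : ℕ) = 2 := rfl
    have e3 : ((3 : Fin 6) : ℕ) = 3 := rfl
    have e4 : ((4 : Fin 6) : ℕ) = 4 := rfl
    have e5 : ((5 : Fin 6) : ℕ) = 5 := rfl
    simp only [e0, e1, e2, e3, e4, e5, zero_add, Nat.reduceAdd, g3, g4, g5, g6] at H0 H1 H2 H3 H4 H5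
    obtain ⟨p, P0, P1, P2⟩ := tri_pos (fun z => - gf R x 0 z) (gf R x 1) (fun z => - gf R x 2 z)
      (gf_aff R x 0).neg (gf_aff R x 1) (gf_aff R x 2).neg A0 A2 A4
      (fun z hz => ⟨by linarith [(H0 z hz).1], (H0 z hz).2⟩)
      (fun z hz => ⟨(H2 z hz).2, by linarith [(H2 z hz).1]⟩)
      (fun z hz => ⟨by linarith [(H4 z hz).1], (H4 z hz).2⟩)
      (htrans A0 hA0 A2 hA2 A4 hA4)
    obtain ⟨q, Q0, Q1, Q2⟩ := tri_pos (gf R x 0) (fun z => - gf R x 1 z) (gf R x 2)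
      (gf_aff R x 0) (gf_aff R x 1).neg (gf_aff R x 2) A3 A5 A1
      (fun z hz => ⟨by linarith [(H3 z hz).1], by linarith [(H3 z hz).2]⟩)
      (fun z hz => ⟨(H5 z hz).2, by linarith [(H5 z hz).1]⟩)
      (fun z hz => ⟨by linarith [(H1 z hz).1], (H1 z hz).2⟩)
      (htrans A3 hA3 A5 hA5 A1 hA1)
    exact no_both R hx p q (by linarith) P1 (by linarith) Q0 (by linarith) Q2
  · rw [Set.not_subset] at hcov
    obtain ⟨x, hx, hxU⟩ := hcov
    have hno : ∀ i : Fin 6, ∀ A ∈ G,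
        ¬ ∀ z ∈ A, gf R x i z < 0 ∧ 0 < gf R x ((i : ℕ) + 1) z := by
      intro i A hA h
      exact hxU (Set.mem_iUnion.2 ⟨i, (hUmem i x).2 ⟨A, hA, h⟩⟩)
    obtain ⟨L0, l0, z0⟩ := gf_line R x 0
    obtain ⟨L1, l1, z1⟩ := gf_line R x 1
    obtain ⟨L2, l2, z2⟩ := gf_line R x 2
    refine ⟨L0, L1, L2, L2, l0, l1, l2, l2, fun A hA => ?_⟩
    by_contra hcon
    have n0 : ∀ z ∈ A, gf R x 0 z ≠ 0 := fun z hz h => hcon (Or.inl ⟨z, z0 z h, hz⟩)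
    have n1 : ∀ z ∈ A, gf R x 1 z ≠ 0 := fun z hz h => hcon (Or.inr (Or.inl ⟨z, z1 z h, hz⟩))
    have n2 : ∀ z ∈ A, gf R x 2 z ≠ 0 :=
      fun z hz h => hcon (Or.inr (Or.inr (Or.inl ⟨z, z2 z h, hz⟩)))
    have g3 : ∀ z, gf R x 3 z = - gf R x 0 z := gf_add_three R hx 0 (by omega)
    have g4 : ∀ z, gf R x 4 z = - gf R x 1 z := gf_add_three R hx 1 (by omega)
    have g5 : ∀ z, gf R x 5 z = - gf R x 2 z := gf_add_three R hx 2 (by omega)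
    have g6 : ∀ z, gf R x 6 z = gf R x 0 z := fun z => by
      rw [show gf R x 6 z = - gf R x 3 z from gf_add_three R hx 3 (by omega) z, g3, neg_neg]
    have hc := (hbody A hA).2.2
    have e0 : ((0 : Fin 6) : ℕ) = 0 := rfl
    have e1 : ((1 : Fin 6) : ℕ) = 1 := rfl
    have e2 : ((2 : Fin 6) : ℕ) = 2 := rfl
    have e3 : ((3 : Fin 6) : ℕ) = 3 := rfl
    have e4 : ((4 : Fin 6) : ℕ) = 4 := rfl
    have e5 : ((5 : Fin 6) : ℕ) = 5 := rfl
    have N0 := hno 0 A hA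
    have N1 := hno 1 A hA
    have N2 := hno 2 A hA
    have N3 := hno 3 A hA
    have N4 := hno 4 A hA
    have N5 := hno 5 A hA
    simp only [e0, e1, e2, e3, e4, e5, zero_add, Nat.reduceAdd, g3, g4, g5, g6, neg_pos,
      neg_neg_iff_pos] at N0 N1 N2 N3 N4 N5
    rcases sign_const R x 0 A hc n0 with s0 | s0 <;> rcases sign_const R x 1 A hc n1 with s1 | s1 <;>
      rcases sign_const R x 2 A hc n2 with s2 | s2
    · exact N2 fun z hz => ⟨s2 z hz, s0 z hz⟩
    · exact N1 fun z hz => ⟨s1 z hz, s2 z hz⟩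
    · exact N0 fun z hz => ⟨s0 z hz, s1 z hz⟩
    · exact N0 fun z hz => ⟨s0 z hz, s1 z hz⟩
    · exact N3 fun z hz => ⟨s0 z hz, s1 z hz⟩
    · exact N3 fun z hz => ⟨s0 z hz, s1 z hz⟩
    · exact N4 fun z hz => ⟨s1 z hz, s2 z hz⟩
    · exact N5 fun z hz => ⟨s2 z hz, s0 z hz⟩
end
end
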